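/- arXiv:2405.05664 — 3 statements merged into one kernel-verified Lean document; each statement's English description precedes it below -/
import Mathlib

section
/- (Feltrin–Zanolin multiplicity theorem.) Let g : [0,∞) → [0,∞) be continuous and satisfy (g₊), (g₀) and (g_∞), and let h ∈ L¹([a,b]) satisfy condition (h*) with m positivity intervals. Then there exists μ* > 0 such that for every μ > μ* the Dirichlet problem (D_μ): u'' + (h⁺(t) − μ h⁻(t)) g(u) = 0, u(a) = 0 = u(b), has at least 2^m − 1 positive solutions. -/
open Set MeasureTheory Filter Topology

/-- Carathéodory solution of `u'' + F(t, u) = 0` on `[a,b]`. -/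
def IsCaraSol (a b : ℝ) (F : ℝ → ℝ → ℝ) (u u' : ℝ → ℝ) : Prop :=
  (∀ t ∈ Set.Icc a b, HasDerivAt u (u' t) t) ∧
  IntervalIntegrable (fun s => F s (u s)) MeasureTheory.volume a b ∧
  ∀ t ∈ Set.Icc a b, u' t = u' a - ∫ s in a..t, F s (u s)

/-- The positive part `h⁺ = |h|/2 + h/2` of a weight function. -/
noncomputable def posW (h : ℝ → ℝ) : ℝ → ℝ := fun t => |h t| / 2 + h t / 2

/-- The negative part `h⁻ = |h|/2 - h/2` of a weight function. -/
noncomputable def negW (h : ℝ → ℝ) : ℝ → ℝ := fun t => |h t| / 2 - h t / 2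


structure Sol (a : ℝ) (W f : ℝ → ℝ) (s : ℝ) (u p : ℝ → ℝ) : Prop where
  u0 : u a = 0
  du : ∀ t, HasDerivAt u (p t) t
  pe : ∀ t, p t = s - ∫ x in a..t, W x * f (u x)

theorem ii_mul {W v : ℝ → ℝ} (hW : Integrable W) (hv : Continuous v) (x y : ℝ) :
    IntervalIntegrable (fun t => W t * v t) volume x y :=
  (hW.intervalIntegrable).mul_continuousOn hv.continuousOn

theorem cont_prim {W v : ℝ → ℝ} (hW : Integrable W) (hv : Continuous v) (a : ℝ) :
    Continuous (fun t => ∫ x in a..t, W x * v x) :=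
  intervalIntegral.continuous_primitive (fun x y => ii_mul hW hv x y) a

theorem exists_flow (a b : ℝ) (hab : a < b) (W : ℝ → ℝ) (hW : Integrable W)
    (hWout : ∀ x, x ∉ Icc a b → W x = 0) (f : ℝ → ℝ) (Lf : NNReal) (hf : LipschitzWith Lf f) :
    ∃ U P : ℝ → ℝ → ℝ, (∀ s, Sol a W f s (U s) (P s)) ∧
      ∃ Cst, ∀ s s', ∀ t ∈ Icc a b, |U s t - U s' t| ≤ Cst * |s - s'| := by
  have hfc := hf.continuous
  set w1 : ℝ := ∫ x, |W x| with hw1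
  have hw1n : 0 ≤ w1 := integral_nonneg fun _ => abs_nonneg _
  set l : ℝ := 2 * (Lf * w1) + 1 with hl
  have hLn : (0:ℝ) ≤ Lf := Lf.2
  have hlp : 0 < l := by positivity
  let ex : C(Icc a b, ℝ) → ℝ → ℝ := fun v => IccExtend hab.le v
  have hex : ∀ v, Continuous (ex v) := fun v => v.continuous.Icc_extend'
  let q : C(Icc a b, ℝ) → ℝ → ℝ := fun v x => f (Real.exp (l * x) * ex v x)
  have hq : ∀ v, Continuous (q v) := fun v => by
    have := hex v
    simp only [q]; fun_prop
  let pp : ℝ → C(Icc a b, ℝ) → ℝ → ℝ := fun s v y => s - ∫ x in a..y, W x * q v x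
  have hpp : ∀ s v, Continuous (pp s v) := fun s v => continuous_const.sub (cont_prim hW (hq v) a)
  let uu : ℝ → C(Icc a b, ℝ) → ℝ → ℝ := fun s v t => ∫ y in a..t, pp s v y
  have huu : ∀ s v t, HasDerivAt (uu s v) (pp s v t) t := fun s v t =>
    intervalIntegral.integral_hasDerivAt_right ((hpp s v).intervalIntegrable _ _)
      ((hpp s v).stronglyMeasurableAtFilter _ _) (hpp s v).continuousAt
  have huuc : ∀ s v, Continuous (uu s v) := fun s v =>
    continuous_iff_continuousAt.2 fun t => (huu s v t).continuousAt
  let T : ℝ → C(Icc a b, ℝ) → C(Icc a b, ℝ) := fun s v =>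
    ⟨fun t => Real.exp (-(l * t)) * uu s v t, by have := huuc s v; fun_prop⟩
  have hexd : ∀ v v' x, |ex v x - ex v' x| ≤ dist v v' := fun v v' x => by
    have := ContinuousMap.dist_apply_le_dist (f := v) (g := v') (projIcc a b hab.le x)
    simpa [Real.dist_eq, ex, IccExtend] using this
  have hpd : ∀ s v v', ∀ y, a ≤ y → |pp s v y - pp s v' y| ≤ Lf * w1 * dist v v' * Real.exp (l * y) := by
    intro s v v' y hy
    have e1 : pp s v y - pp s v' y = - ∫ x in a..y, (W x * q v x - W x * q v' x) := by
      rw [intervalIntegral.integral_sub (ii_mul hW (hq v) _ _) (ii_mul hW (hq v') _ _)]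
      simp only [pp]; ring
    rw [e1, abs_neg, intervalIntegral.integral_of_le hy, ← Real.norm_eq_abs]
    have hint : Integrable (fun x => |W x| * (Lf * dist v v' * Real.exp (l * y))) :=
      hW.abs.mul_const _
    calc ‖∫ x in Ioc a y, (W x * q v x - W x * q v' x)‖
        ≤ ∫ x in Ioc a y, |W x| * (Lf * dist v v' * Real.exp (l * y)) := by
          apply norm_integral_le_of_norm_le hint.integrableOn
          filter_upwards [ae_restrict_mem measurableSet_Ioc] with x hx
          rw [← mul_sub, Real.norm_eq_abs, abs_mul]
          apply mul_le_mul_of_nonneg_left _ (abs_nonneg _)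
          have h1 := hf.dist_le_mul (Real.exp (l * x) * ex v x) (Real.exp (l * x) * ex v' x)
          rw [Real.dist_eq, Real.dist_eq, ← mul_sub, abs_mul, abs_of_pos (Real.exp_pos _)] at h1
          refine h1.trans ?_
          rw [mul_assoc]
          apply mul_le_mul_of_nonneg_left _ hLn
          rw [mul_comm]
          apply mul_le_mul (hexd _ _ _) _ (Real.exp_pos _).le dist_nonneg
          apply Real.exp_le_exp.2
          exact mul_le_mul_of_nonneg_left hx.2 hlp.le
      _ ≤ ∫ x, |W x| * (Lf * dist v v' * Real.exp (l * y)) := by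
          apply setIntegral_le_integral hint
          exact Eventually.of_forall fun x => by positivity
      _ = _ := by rw [integral_mul_const]; ring
  have hud : ∀ s v v', ∀ t, a ≤ t → |uu s v t - uu s v' t| ≤ (1/2) * dist v v' * Real.exp (l * t) := by
    intro s v v' t ht
    have e1 : uu s v t - uu s v' t = ∫ y in a..t, (pp s v y - pp s v' y) := by
      rw [intervalIntegral.integral_sub ((hpp s v).intervalIntegrable _ _) ((hpp s v').intervalIntegrable _ _)]
    rw [e1, ← Real.norm_eq_abs]
    have hder : ∀ y ∈ uIcc a t, HasDerivAt (fun y => Lf * w1 * dist v v' * (Real.exp (l * y) / l))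
        (Lf * w1 * dist v v' * Real.exp (l * y)) y := by
      intro y _
      have : HasDerivAt (fun y => Real.exp (l * y) / l) (Real.exp (l * y)) y := by
        have := ((hasDerivAt_id y).const_mul l).exp.div_const l
        simpa [hlp.ne'] using this
      exact this.const_mul _
    have hi := intervalIntegral.integral_eq_sub_of_hasDerivAt hder (by
      apply Continuous.intervalIntegrable; fun_prop)
    calc ‖∫ y in a..t, (pp s v y - pp s v' y)‖
        ≤ ∫ y in a..t, Lf * w1 * dist v v' * Real.exp (l * y) := by
          apply intervalIntegral.norm_integral_le_of_norm_le ht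
          · exact Eventually.of_forall fun y hy => hpd s v v' y hy.1.le
          · apply Continuous.intervalIntegrable; fun_prop
      _ ≤ _ := by
          rw [hi]
          have h1 : 0 ≤ Lf * w1 * dist v v' * (Real.exp (l * a) / l) := by positivity
          have h2 : Lf * w1 * dist v v' * (Real.exp (l * t) / l) ≤ 1/2 * dist v v' * Real.exp (l * t) := by
            have : Lf * w1 / l ≤ 1/2 := by rw [div_le_iff₀ hlp, hl]; linarith
            calc _ = (Lf * w1 / l) * (dist v v' * Real.exp (l * t)) := by ring
              _ ≤ 1/2 * (dist v v' * Real.exp (l * t)) := by gcongr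
              _ = _ := by ring
          linarith
  have hexpm : ∀ t, Real.exp (-(l*t)) * Real.exp (l*t) = 1 := fun t => by
    rw [← Real.exp_add]; simp
  have hT : ∀ s, ContractingWith (1/2 : NNReal) (T s) := by
    intro s
    refine ⟨by rw [← NNReal.coe_lt_coe]; norm_num, LipschitzWith.of_dist_le_mul fun v v' => ?_⟩
    rw [ContinuousMap.dist_le (by positivity)]
    intro t
    simp only [T, ContinuousMap.coe_mk, Real.dist_eq]
    rw [← mul_sub, abs_mul, abs_of_pos (Real.exp_pos _)]
    calc _ ≤ Real.exp (-(l*t)) * ((1/2) * dist v v' * Real.exp (l * t)) := by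
          gcongr; exact hud s v v' t t.2.1
      _ = (1/2) * dist v v' * (Real.exp (-(l*t)) * Real.exp (l*t)) := by ring
      _ = _ := by rw [hexpm]; norm_num
  have : Nonempty C(Icc a b, ℝ) := ⟨0⟩
  let fx : ℝ → C(Icc a b, ℝ) := fun s => (hT s).fixedPoint
  have hfx : ∀ s, T s (fx s) = fx s := fun s => (hT s).fixedPoint_isFixedPt
  have hfe : ∀ s, ∀ t ∈ Icc a b, uu s (fx s) t = Real.exp (l * t) * ex (fx s) t := by
    intro s t ht
    have h1 := congrArg (fun v : C(Icc a b, ℝ) => v ⟨t, ht⟩) (hfx s)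
    simp only [T, ContinuousMap.coe_mk] at h1
    have h2 : ex (fx s) t = fx s ⟨t, ht⟩ := IccExtend_of_mem _ _ ht
    rw [h2, ← h1, ← mul_assoc, mul_comm (Real.exp (l*t)), hexpm, one_mul]
  refine ⟨fun s => uu s (fx s), fun s => pp s (fx s), fun s => ⟨by simp [uu], huu s _, ?_⟩, ?_⟩
  · intro t
    simp only [pp]
    congr 2
    ext x
    by_cases hx : x ∈ Icc a b
    · simp only [q]; rw [hfe s x hx]
    · simp [hWout x hx]
  · refine ⟨Real.exp (l * b) * (((Real.exp (-(l * a)) * (b - a))) / (1 - 1/2)), ?_⟩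
    intro s s' t ht
    have hd : dist (fx s) (fx s') ≤ (Real.exp (-(l * a)) * (b - a) * |s - s'|) / (1 - ((1/2 : NNReal) : ℝ)) := by
      apply (hT s).fixedPoint_lipschitz_in_map (hT s')
      intro v
      rw [ContinuousMap.dist_le (by have := sub_pos.2 hab; positivity)]
      intro t
      simp only [T, ContinuousMap.coe_mk, Real.dist_eq]
      rw [← mul_sub, abs_mul, abs_of_pos (Real.exp_pos _)]
      have e1 : uu s v t - uu s' v t = (t - a) * (s - s') := by
        simp only [uu]
        rw [← intervalIntegral.integral_sub ((hpp s v).intervalIntegrable _ _) ((hpp s' v).intervalIntegrable _ _)]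
        simp [pp]; ring
      rw [e1, abs_mul, abs_of_nonneg (sub_nonneg.2 t.2.1), mul_assoc]
      apply mul_le_mul
      · apply Real.exp_le_exp.2
        have := mul_le_mul_of_nonneg_left t.2.1 hlp.le
        linarith
      · gcongr; exact t.2.2
      · have := t.2.1
        exact mul_nonneg (by linarith) (abs_nonneg _)
      · positivity
    simp only
    rw [hfe s t ht, hfe s' t ht, ← mul_sub, abs_mul, abs_of_pos (Real.exp_pos _)]
    calc _ ≤ Real.exp (l * b) * ((Real.exp (-(l * a)) * (b - a) * |s - s'|) / (1 - ((1/2 : NNReal) : ℝ))) := by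
          apply mul_le_mul _ ((hexd _ _ _).trans hd) (abs_nonneg _) (Real.exp_pos _).le
          apply Real.exp_le_exp.2
          exact mul_le_mul_of_nonneg_left ht.2 hlp.le
      _ = _ := by
          norm_num; ring


theorem mv_ge {u p : ℝ → ℝ} (du : ∀ t, HasDerivAt u (p t) t) {x y c : ℝ} (hxy : x ≤ y)
    (h : ∀ z ∈ Icc x y, c ≤ p z) : c * (y - x) ≤ u y - u x := by
  rcases hxy.eq_or_lt with rfl | hlt
  · simp
  obtain ⟨z, hz, e⟩ := exists_hasDerivAt_eq_slope u p hlt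
    (fun t _ => (du t).continuousAt.continuousWithinAt) (fun t _ => du t)
  have := h z ⟨hz.1.le, hz.2.le⟩
  rw [e, le_div_iff₀ (sub_pos.2 hlt)] at this
  exact this

theorem mv_le {u p : ℝ → ℝ} (du : ∀ t, HasDerivAt u (p t) t) {x y c : ℝ} (hxy : x ≤ y)
    (h : ∀ z ∈ Icc x y, p z ≤ c) : u y - u x ≤ c * (y - x) := by
  rcases hxy.eq_or_lt with rfl | hlt
  · simp
  obtain ⟨z, hz, e⟩ := exists_hasDerivAt_eq_slope u p hlt
    (fun t _ => (du t).continuousAt.continuousWithinAt) (fun t _ => du t)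
  have := h z ⟨hz.1.le, hz.2.le⟩
  rw [e, div_le_iff₀ (sub_pos.2 hlt)] at this
  exact this

theorem mv_eq {u p : ℝ → ℝ} (du : ∀ t, HasDerivAt u (p t) t) {x y : ℝ} (hlt : x < y) :
    ∃ z ∈ Ioo x y, p z * (y - x) = u y - u x := by
  obtain ⟨z, hz, e⟩ := exists_hasDerivAt_eq_slope u p hlt
    (fun t _ => (du t).continuousAt.continuousWithinAt) (fun t _ => du t)
  exact ⟨z, hz, by rw [e, div_mul_cancel₀ _ (sub_pos.2 hlt).ne']⟩

theorem int_ge {A v : ℝ → ℝ} (hA : Integrable A) (hA0 : ∀ t, 0 ≤ A t) (hv : Continuous v)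
    {x y c : ℝ} (hxy : x ≤ y) (h : ∀ t ∈ Icc x y, c ≤ v t) :
    c * ∫ t in x..y, A t ≤ ∫ t in x..y, A t * v t := by
  rw [← intervalIntegral.integral_const_mul]
  apply intervalIntegral.integral_mono_on hxy (hA.intervalIntegrable.const_mul _) (ii_mul hA hv _ _)
  intro t ht
  rw [mul_comm]
  exact mul_le_mul_of_nonneg_left (h t ht) (hA0 t)

theorem int_le {A v : ℝ → ℝ} (hA : Integrable A) (hA0 : ∀ t, 0 ≤ A t) (hv : Continuous v)
    {x y c : ℝ} (hxy : x ≤ y) (h : ∀ t ∈ Icc x y, v t ≤ c) (hc : 0 ≤ c) :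
    ∫ t in x..y, A t * v t ≤ c * ∫ t, A t := by
  have h1 : ∫ t in x..y, A t * v t ≤ ∫ t in x..y, c * A t := by
    apply intervalIntegral.integral_mono_on hxy (ii_mul hA hv _ _) (hA.intervalIntegrable.const_mul _)
    intro t ht
    rw [mul_comm c]
    exact mul_le_mul_of_nonneg_left (h t ht) (hA0 t)
  refine h1.trans ?_
  rw [intervalIntegral.integral_const_mul]
  apply mul_le_mul_of_nonneg_left _ hc
  rw [intervalIntegral.integral_of_le hxy]
  exact setIntegral_le_integral hA (Eventually.of_forall hA0)

theorem int_nonneg {A v : ℝ → ℝ} (hA0 : ∀ t, 0 ≤ A t)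
    {x y : ℝ} (hxy : x ≤ y) (h : ∀ t, 0 ≤ v t) : 0 ≤ ∫ t in x..y, A t * v t :=
  intervalIntegral.integral_nonneg hxy fun t _ => mul_nonneg (hA0 t) (h t)

namespace Sol
variable {a : ℝ} {W f : ℝ → ℝ} {s : ℝ} {u p : ℝ → ℝ}

theorem cu (S : Sol a W f s u p) : Continuous u :=
  continuous_iff_continuousAt.2 fun t => (S.du t).continuousAt

theorem pdiff (S : Sol a W f s u p) (hW : Integrable W) (hf : Continuous f) (x y : ℝ) :
    p y - p x = - ∫ t in x..y, W t * f (u t) := by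
  have hc : Continuous fun t => f (u t) := hf.comp S.cu
  have := intervalIntegral.integral_interval_sub_left (ii_mul hW hc a y) (ii_mul hW hc a x)
  rw [S.pe, S.pe, ← this]; ring

theorem cp (S : Sol a W f s u p) (hW : Integrable W) (hf : Continuous f) : Continuous p := by
  have hc : Continuous fun t => f (u t) := hf.comp S.cu
  have : p = fun t => s - ∫ x in a..t, W x * f (u x) := funext S.pe
  rw [this]
  exact continuous_const.sub (cont_prim hW hc a)

theorem pa (S : Sol a W f s u p) : p a = s := by rw [S.pe]; simp

/-- zero initial data force the zero solution when the nonlinearity is linearly bounded. -/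
theorem zero_step (S : Sol a W f s u p) (hW : Integrable W) (hf : Continuous f) {K : ℝ}
    (hK : 0 ≤ K) (hb : ∀ x, |W x * f (u x)| ≤ K * |u x| * |W x|)
    {d : ℝ} (hd : 0 ≤ d) (hd1 : d * (K * ∫ x, |W x|) ≤ 1/2)
    {t0 : ℝ} (h0 : u t0 = 0) (h1 : p t0 = 0) : ∀ t, |t - t0| ≤ d → u t = 0 ∧ p t = 0 := by
  have hcmp : IsCompact (Icc (t0 - d) (t0 + d)) := isCompact_Icc
  have hne : (Icc (t0 - d) (t0 + d)).Nonempty := ⟨t0, by constructor <;> linarith⟩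
  obtain ⟨z, hz, hmax⟩ := hcmp.exists_isMaxOn hne (S.cu.abs.continuousOn)
  have hpb : ∀ y ∈ Icc (t0 - d) (t0 + d), |p y| ≤ |u z| * (K * ∫ x, |W x|) := by
    intro y hy
    have e : p y = - ∫ t in t0..y, W t * f (u t) := by
      have := S.pdiff hW hf t0 y; rw [h1] at this; linarith
    rw [e, abs_neg]
    have hint : Integrable (fun x => K * |u z| * |W x|) := hW.abs.const_mul _
    have h2 : |∫ t in t0..y, W t * f (u t)| ≤ ∫ t in uIoc t0 y, K * |u z| * |W t| := by
      rw [← Real.norm_eq_abs, intervalIntegral.norm_intervalIntegral_eq]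
      apply norm_integral_le_of_norm_le hint.integrableOn
      filter_upwards [ae_restrict_mem measurableSet_uIoc] with x hx
      refine (hb x).trans ?_
      have hx' : x ∈ Icc (t0 - d) (t0 + d) := by
        have := uIoc_subset_uIcc hx
        exact (uIcc_subset_Icc ⟨by linarith, by linarith⟩ hy) this
      have := hmax hx'
      simp only [mem_ofPred_eq] at this
      gcongr
    refine h2.trans ((setIntegral_le_integral hint
      (Eventually.of_forall fun x => by positivity)).trans ?_)
    rw [integral_const_mul]
    apply le_of_eq; ring
  have huz : |u z| ≤ |u z| * (K * ∫ x, |W x|) * |z - t0| := by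
    have := Convex.norm_image_sub_le_of_norm_hasDerivWithin_le
      (fun y hy => (S.du y).hasDerivWithinAt) (s := Icc (t0 - d) (t0 + d)) (f := u) (f' := p)
      (C := |u z| * (K * ∫ x, |W x|)) (x := t0) (y := z) (fun y hy => hpb y hy) (convex_Icc _ _)
      ⟨by linarith, by linarith⟩ hz
    simpa [h0] using this
  have hI : 0 ≤ ∫ x, |W x| := integral_nonneg fun _ => abs_nonneg _
  have hzd : |z - t0| ≤ d := by rw [abs_le]; constructor <;> linarith [hz.1, hz.2]
  have : |u z| ≤ |u z| * (1/2) := by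
    refine huz.trans ?_
    rw [mul_assoc]
    apply mul_le_mul_of_nonneg_left _ (abs_nonneg _)
    refine le_trans ?_ hd1
    rw [mul_comm]
    exact mul_le_mul_of_nonneg_right hzd (by positivity)
  have hz0 : |u z| = 0 := le_antisymm (by linarith) (abs_nonneg _)
  intro t ht
  have htm : t ∈ Icc (t0 - d) (t0 + d) := by
    rw [abs_le] at ht; constructor <;> linarith [ht.1, ht.2]
  constructor
  · have := hmax htm
    simp only [mem_ofPred_eq, hz0] at this
    exact abs_eq_zero.1 (le_antisymm this (abs_nonneg _))
  · have := hpb t htm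
    rw [hz0, zero_mul] at this
    exact abs_eq_zero.1 (le_antisymm this (abs_nonneg _))

theorem zero_all (S : Sol a W f s u p) (hW : Integrable W) (hf : Continuous f) {K : ℝ}
    (hK : 0 ≤ K) (hb : ∀ x, |W x * f (u x)| ≤ K * |u x| * |W x|)
    {t0 : ℝ} (h0 : u t0 = 0) (h1 : p t0 = 0) : ∀ t, u t = 0 ∧ p t = 0 := by
  have hI : 0 ≤ ∫ x, |W x| := integral_nonneg fun _ => abs_nonneg _
  set q := K * ∫ x, |W x|
  have hq : 0 ≤ q := by positivity
  set d := 1 / (2 * q + 1) with hd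
  have hdp : 0 < d := by positivity
  have hd1 : d * q ≤ 1/2 := by
    rw [hd, one_div, inv_mul_le_iff₀ (by positivity)]; linarith
  have key : ∀ n : ℕ, ∀ t, |t - t0| ≤ n * d → u t = 0 ∧ p t = 0 := by
    intro n
    induction n with
    | zero =>
      intro t ht
      have : t = t0 := by
        simp at ht; linarith [abs_eq_zero.1 (le_antisymm (by simpa using ht) (abs_nonneg (t - t0)))]
      subst this; exact ⟨h0, h1⟩
    | succ n ih =>
      intro t ht
      push_cast at ht
      have hn : (0:ℝ) ≤ n := Nat.cast_nonneg n
      -- intermediate point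
      set c : ℝ := n / (n + 1) with hc
      have hc1 : c * (n + 1) = n := by rw [hc]; field_simp
      have hc0 : 0 ≤ c := by positivity
      have hc2 : 1 - c = 1 / (n + 1) := by rw [hc]; field_simp; ring
      have hm := ih (t0 + c * (t - t0)) (by
        rw [add_sub_cancel_left, abs_mul, abs_of_nonneg hc0]
        calc c * |t - t0| ≤ c * ((n + 1) * d) := by gcongr
          _ = n * d := by rw [← mul_assoc, hc1])
      refine S.zero_step hW hf hK hb hdp.le hd1 hm.1 hm.2 t ?_
      have : t - (t0 + c * (t - t0)) = (1 - c) * (t - t0) := by ring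
      rw [this, abs_mul, hc2, abs_of_pos (by positivity)]
      rw [one_div, inv_mul_le_iff₀ (by positivity)]; exact ht
  intro t
  obtain ⟨n, hn⟩ := exists_nat_ge (|t - t0| / d)
  exact key n t (by rwa [div_le_iff₀ hdp] at hn)

/-- once below zero with negative slope, stays below. -/
theorem neg_fwd (S : Sol a W f s u p) (hW : Integrable W) (hf : Continuous f)
    (hf0 : ∀ x ≤ 0, f x = 0) {x : ℝ} (hx : u x ≤ 0) (hpx : p x < 0) : ∀ t > x, u t < 0 := by
  have lin : ∀ y ≥ x, (∀ t ∈ Icc x y, u t ≤ 0) → u y = u x + p x * (y - x) := by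
    intro y hy h
    have hp : ∀ z ∈ Icc x y, p z = p x := by
      intro z hz
      have := S.pdiff hW hf x z
      rw [intervalIntegral.integral_congr (g := fun _ => 0)] at this
      · simp at this; linarith
      · intro t ht
        rw [uIcc_of_le hz.1] at ht
        simp [hf0 _ (h t ⟨ht.1, ht.2.trans hz.2⟩)]
    have h1 := mv_ge S.du hy fun z hz => (hp z hz).ge
    have h2 := mv_le S.du hy fun z hz => (hp z hz).le
    linarith
  -- u ≤ 0 after x
  have key : ∀ t ≥ x, u t ≤ 0 := by
    by_contra! hcon
    obtain ⟨t, ht, hut⟩ := hcon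
    set Z := {y | x ≤ y ∧ 0 < u y} with hZ
    have hZne : Z.Nonempty := ⟨t, ht, hut⟩
    have hZb : BddBelow Z := ⟨x, fun y hy => hy.1⟩
    set y0 := sInf Z
    have hxy0 : x ≤ y0 := le_csInf hZne fun y hy => hy.1
    have hbefore : ∀ z, x ≤ z → z < y0 → u z ≤ 0 := by
      intro z hz hzy
      by_contra! hc
      exact absurd (csInf_le hZb (⟨hz, hc⟩ : z ∈ Z)) (not_le.2 hzy)
    have hu0 : u y0 ≤ 0 := by
      rcases hxy0.eq_or_lt with e | hlt
      · rw [← e]; exact hx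
      · have : Tendsto u (𝓝[<] y0) (𝓝 (u y0)) := S.cu.continuousAt.continuousWithinAt
        apply le_of_tendsto this
        filter_upwards [Ioo_mem_nhdsLT hlt] with z hz
        exact hbefore z hz.1.le hz.2
    have hle : ∀ z ∈ Icc x y0, u z ≤ 0 := by
      intro z hz
      rcases hz.2.eq_or_lt with e | hlt
      · rw [e]; exact hu0
      · exact hbefore z hz.1 hlt
    -- p y0 = p x < 0
    have hpy : p y0 = p x := by
      have := S.pdiff hW hf x y0
      rw [intervalIntegral.integral_congr (g := fun _ => 0)] at this
      · simp at this; linarith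
      · intro t ht
        rw [uIcc_of_le hxy0] at ht
        simp [hf0 _ (hle t ht)]
    have hev : ∀ᶠ z in 𝓝 y0, p z < 0 := (S.cp hW hf).continuousAt.eventually_lt
      continuousAt_const (by rw [hpy]; exact hpx)
    obtain ⟨e, he, hee⟩ := Metric.eventually_nhds_iff.1 hev
    obtain ⟨z, hz, hze⟩ := exists_lt_of_csInf_lt hZne (lt_add_of_pos_right y0 he)
    have hyz : y0 ≤ z := csInf_le hZb hz
    have := mv_le S.du hyz (c := 0) fun q hq => (hee (by
      rw [Real.dist_eq, abs_lt]; constructor <;> linarith [hq.1, hq.2])).le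
    have := hz.2
    linarith
  intro t ht
  rw [lin t ht.le fun z hz => key z hz.1]
  nlinarith [mul_pos_of_neg_of_neg hpx (by linarith : x - t < 0)]

theorem neg_stay (S : Sol a W f s u p) (hW : Integrable W) (hf : Continuous f)
    (hf0 : ∀ x ≤ 0, f x = 0) {t1 : ℝ} (ht1 : a ≤ t1) (hu : u t1 < 0) :
    ∀ t ≥ t1, u t < 0 := by
  -- find ξ ∈ (a,t1) with u ξ ≤ 0 and p ξ < 0
  have hlt : a < t1 := by
    rcases ht1.eq_or_lt with e | h
    · rw [← e, S.u0] at hu; exact absurd hu (lt_irrefl _)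
    · exact h
  set Z := {y | y ∈ Icc a t1 ∧ 0 ≤ u y} with hZ
  have hZc : IsClosed Z := (isClosed_Icc).inter (isClosed_le continuous_const S.cu)
  have hZne : Z.Nonempty := ⟨a, ⟨le_rfl, ht1⟩, S.u0.ge⟩
  have hZb : BddAbove Z := ⟨t1, fun y hy => hy.1.2⟩
  have hm := hZc.csSup_mem hZne hZb
  set y0 := sSup Z
  have hy0 : y0 < t1 := by
    rcases hm.1.2.eq_or_lt with e | h
    · have := hm.2; rw [e] at this; linarith
    · exact h
  obtain ⟨z, hz, e⟩ := mv_eq S.du hy0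
  have hpz : p z < 0 := by
    by_contra! hc
    have := mul_nonneg hc (sub_pos.2 hy0).le
    linarith [hm.2]
  have huz : u z ≤ 0 := by
    by_contra! hc
    have := le_csSup hZb (⟨⟨hm.1.1.trans hz.1.le, hz.2.le⟩, hc.le⟩ : z ∈ Z)
    linarith [hz.1]
  intro t ht
  exact S.neg_fwd hW hf hf0 huz hpz t (lt_of_lt_of_le hz.2 ht)

theorem nonneg_of (S : Sol a W f s u p) (hW : Integrable W) (hf : Continuous f)
    (hf0 : ∀ x ≤ 0, f x = 0) {t : ℝ} (hu : 0 ≤ u t) : ∀ x ∈ Icc a t, 0 ≤ u x := by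
  intro x hx
  by_contra! hc
  linarith [S.neg_stay hW hf hf0 hx.1 hc t hx.2]

end Sol


theorem no_big {u p A f : ℝ → ℝ} {σ τ δ κ K Y M L : ℝ} (du : ∀ t, HasDerivAt u (p t) t)
    (hA : Integrable A) (hA0 : ∀ t, 0 ≤ A t) (hf : Continuous f) (hfn : ∀ x, 0 ≤ f x)
    (hp : ∀ x y, σ ≤ x → x ≤ y → y ≤ τ → p y - p x = - ∫ t in x..y, A t * f (u t))
    (hδ : 0 < δ) (hδ2 : 2 * δ < τ - σ) (hL : τ - σ ≤ L)
    (hκ : κ ≤ ∫ t in (σ + δ)..(τ - δ), A t) (hK0 : 0 ≤ K)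
    (hK : ∀ x ≥ Y, K * x ≤ f x) (hM : 0 < M) (hYM : Y * L ≤ M * δ) (hbig : 2 * L < K * κ * δ ^ 2)
    (hnn : ∀ x ∈ Icc σ τ, 0 ≤ u x) : ∀ x ∈ Icc σ τ, u x < M := by
  by_contra! hcon
  obtain ⟨x0, hx0, hMx0⟩ := hcon
  have cu : Continuous u := continuous_iff_continuousAt.2 fun t => (du t).continuousAt
  obtain ⟨z, hz, hmax⟩ := isCompact_Icc.exists_isMaxOn ⟨x0, hx0⟩ (cu.continuousOn (s := Icc σ τ))
  have hmax' : ∀ x ∈ Icc σ τ, u x ≤ u z := fun x hx => hmax hx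
  set N := u z with hN
  have hMN : M ≤ N := hMx0.trans (hmax' x0 hx0)
  have hNp : 0 < N := hM.trans_le hMN
  have hLp : 0 < L := by linarith
  have anti : ∀ x y, σ ≤ x → x ≤ y → y ≤ τ → p y ≤ p x := by
    intro x y h1 h2 h3
    have := hp x y h1 h2 h3
    have := int_nonneg (v := fun t => f (u t)) hA0 h2 fun t => hfn _
    linarith
  have inner : ∀ t ∈ Icc (σ + δ) (τ - δ), N * δ ≤ u t * L := by
    intro t ht
    have ht' : t ∈ Icc σ τ := ⟨by linarith [ht.1], by linarith [ht.2]⟩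
    have hut := hnn t ht'
    have hus := hnn σ ⟨le_rfl, by linarith⟩
    have hut2 := hnn τ ⟨by linarith, le_rfl⟩
    rcases le_total t z with htz | hzt
    · have h1 := mv_ge du ht'.1 (c := p t) fun q hq => anti q t hq.1 hq.2 ht'.2
      have h2 := mv_le du htz (c := p t) fun q hq => anti t q ht'.1 hq.1 (hq.2.trans hz.2)
      rcases le_total 0 (p t) with hpt | hpt
      · have h3 : p t * δ ≤ u t := by nlinarith [ht.1]
        have h4 : N * δ ≤ u t * δ + (p t * δ) * (z - t) := by nlinarith
        have h5 : (p t * δ) * (z - t) ≤ u t * (z - t) := by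
          apply mul_le_mul_of_nonneg_right h3; linarith
        nlinarith [hz.2, ht.1]
      · have h3 : N ≤ u t := by nlinarith
        nlinarith
    · have h1 := mv_le du ht'.2 (c := p t) fun q hq => anti t q ht'.1 hq.1 hq.2
      have h2 := mv_ge du hzt (c := p t) fun q hq => anti q t (hz.1.trans hq.1) hq.2 ht'.2
      rcases le_total (p t) 0 with hpt | hpt
      · have h3 : -p t * δ ≤ u t := by nlinarith [ht.2]
        have h4 : N * δ ≤ u t * δ + (-p t * δ) * (t - z) := by nlinarith
        have h5 : (-p t * δ) * (t - z) ≤ u t * (t - z) := by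
          apply mul_le_mul_of_nonneg_right h3; linarith
        nlinarith [hz.1, ht.2]
      · have h3 : N ≤ u t := by nlinarith
        nlinarith
  have hfu : ∀ t ∈ Icc (σ + δ) (τ - δ), K * (N * δ / L) ≤ f (u t) := by
    intro t ht
    have h1 := inner t ht
    have h2 : N * δ / L ≤ u t := by rwa [div_le_iff₀ hLp]
    have h3 : Y ≤ u t := by
      by_contra! hc
      have := mul_lt_mul_of_pos_right hc hLp
      nlinarith
    exact (mul_le_mul_of_nonneg_left h2 hK0).trans (hK _ h3)
  have h1 := int_ge hA hA0 (hf.comp cu) (by linarith : σ + δ ≤ τ - δ) hfu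
  have h2 := hp (σ + δ) (τ - δ) (by linarith) (by linarith) (by linarith)
  have h3 : p (σ + δ) * δ ≤ N := by
    have := mv_ge du (by linarith : σ ≤ σ + δ) (c := p (σ + δ)) fun q hq =>
      anti q (σ + δ) hq.1 hq.2 (by linarith)
    have h4 := hnn σ ⟨le_rfl, by linarith⟩
    have h5 := hmax' (σ + δ) ⟨by linarith, by linarith⟩
    rw [add_sub_cancel_left] at this
    linarith
  have h4 : -N ≤ p (τ - δ) * δ := by
    have := mv_le du (by linarith : τ - δ ≤ τ) (c := p (τ - δ)) fun q hq =>
      anti (τ - δ) q (by linarith) hq.1 hq.2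
    have h4 := hnn τ ⟨by linarith, le_rfl⟩
    have h5 := hmax' (τ - δ) ⟨by linarith, by linarith⟩
    rw [sub_sub_cancel] at this
    linarith
  have hq : 0 ≤ K * (N * δ / L) := by positivity
  have h5 : K * (N * δ / L) * κ ≤ p (σ + δ) - p (τ - δ) := by
    have h6 := mul_le_mul_of_nonneg_left hκ hq
    simp only [Function.comp] at h1
    linarith
  have h6 : K * (N * δ / L) * κ * δ ≤ 2 * N := by nlinarith
  have h7 : K * (N * δ / L) * κ * δ = N * (K * κ * δ ^ 2) / L := by ring
  rw [h7, div_le_iff₀ hLp] at h6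
  nlinarith

theorem slope_lb {u p A f : ℝ → ℝ} {σ τ δ M C : ℝ} (du : ∀ t, HasDerivAt u (p t) t)
    (hA : Integrable A) (hA0 : ∀ t, 0 ≤ A t) (hf : Continuous f)
    (hp : ∀ x y, σ ≤ x → x ≤ y → y ≤ τ → p y - p x = - ∫ t in x..y, A t * f (u t))
    (hδ : 0 < δ) (hδ2 : 2 * δ < τ - σ)
    (hC : ∀ x ≤ M, f x ≤ C) (hC0 : 0 ≤ C) (hM : 0 < M)
    (hnn : ∀ x ∈ Icc σ τ, 0 ≤ u x) (hle : ∀ x ∈ Icc σ τ, u x ≤ M) :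
    -(M / δ + C * ∫ t, A t) ≤ p τ := by
  have cu : Continuous u := continuous_iff_continuousAt.2 fun t => (du t).continuousAt
  have hst : σ < τ := by linarith
  obtain ⟨z, hz, e⟩ := mv_eq du hst
  have h1 := hp z τ hz.1.le hz.2.le le_rfl
  have h2 := int_le hA hA0 (hf.comp cu) hz.2.le
    (fun t ht => hC (u t) (hle t ⟨hz.1.le.trans ht.1, ht.2⟩)) hC0
  simp only [Function.comp] at h2
  have h3 : -(M / δ) ≤ p z := by
    have h4 := hnn τ ⟨hst.le, le_rfl⟩
    have h5 := hle σ ⟨le_rfl, hst.le⟩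
    by_contra! hc
    have h6 : p z * δ < -M := by
      have := mul_lt_mul_of_pos_right hc hδ
      rwa [neg_mul, div_mul_cancel₀ _ hδ.ne'] at this
    nlinarith
  linarith

theorem slope_small {u p B f : ℝ → ℝ} {τ σ' δ κ ε ρ c μ D : ℝ} (du : ∀ t, HasDerivAt u (p t) t)
    (hB : Integrable B) (hB0 : ∀ t, 0 ≤ B t) (hf : Continuous f) (hfn : ∀ x, 0 ≤ f x)
    (hμ : 0 ≤ μ)
    (hp : ∀ x y, τ ≤ x → x ≤ y → y ≤ σ' → p y - p x = μ * ∫ t in x..y, B t * f (u t))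
    (hδ : 0 < δ) (hδ2 : δ < σ' - τ) (hε : 0 < ε)
    (hκ : κ ≤ ∫ t in τ..(σ' - δ), B t) (hc0 : 0 < c) (hc : ∀ x ≥ ρ, c ≤ f x) (hρ : ρ ≤ ε * δ)
    (hD : -D ≤ p τ) (hbig : D ≤ μ * c * κ) (hu : 0 ≤ u σ') : -ε ≤ p σ' := by
  by_contra! hcon
  have cu : Continuous u := continuous_iff_continuousAt.2 fun t => (du t).continuousAt
  have mono : ∀ x y, τ ≤ x → x ≤ y → y ≤ σ' → p x ≤ p y := by
    intro x y h1 h2 h3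
    have h := hp x y h1 h2 h3
    have := mul_nonneg hμ (int_nonneg (v := fun t => f (u t)) hB0 h2 fun t => hfn _)
    linarith
  have hlow : ∀ t ∈ Icc τ (σ' - δ), c ≤ f (u t) := by
    intro t ht
    apply hc
    have := mv_le du (by linarith [ht.2] : t ≤ σ') (c := -ε) fun q hq =>
      (mono q σ' (ht.1.trans hq.1) hq.2 le_rfl).trans hcon.le
    nlinarith [ht.2]
  have h1 := int_ge hB hB0 (hf.comp cu) (by linarith : τ ≤ σ' - δ) hlow
  simp only [Function.comp] at h1
  have h2 := hp τ (σ' - δ) le_rfl (by linarith) (by linarith)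
  have h3 := mono (σ' - δ) σ' (by linarith) (by linarith) le_rfl
  have h4 : μ * (c * κ) ≤ μ * ∫ t in τ..(σ' - δ), B t * f (u t) :=
    mul_le_mul_of_nonneg_left ((mul_le_mul_of_nonneg_left hκ hc0.le).trans h1) hμ
  nlinarith

theorem mid_low {u p A B f : ℝ → ℝ} {σ τ σ' ε μ θ r N L : ℝ}
    (du : ∀ t, HasDerivAt u (p t) t)
    (hA : Integrable A) (hA0 : ∀ t, 0 ≤ A t)
    (hB0 : ∀ t, 0 ≤ B t) (hf : Continuous f) (hfn : ∀ x, 0 ≤ f x)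
    (hμ : 0 ≤ μ) (hst : σ ≤ τ)
    (hp : ∀ x y, σ ≤ x → x ≤ y → y ≤ τ → p y - p x = - ∫ t in x..y, A t * f (u t))
    (hp2 : ∀ x y, τ ≤ x → x ≤ y → y ≤ σ' → p y - p x = μ * ∫ t in x..y, B t * f (u t))
    (hε : 0 < ε) (hps : -ε ≤ p σ) (hL : σ' - σ ≤ L)
    (hθ0 : 0 ≤ θ) (hθ : ∀ x ≤ r, f x ≤ θ) (hsm : (ε + θ * ∫ t, A t) * L ≤ r / 4)
    {z : ℝ} (hz : z ∈ Icc σ τ) (hzN : u z = N) (hmax : ∀ x ∈ Icc σ τ, u x ≤ N)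
    (hN1 : r / 2 ≤ N) (hN2 : N ≤ r) :
    (∀ t ∈ Icc τ σ', r / 4 ≤ u t) ∧ ∀ t ∈ Icc τ σ', -(ε + θ * ∫ t, A t) ≤ p t := by
  have cu : Continuous u := continuous_iff_continuousAt.2 fun t => (du t).continuousAt
  have hp1 : ∀ t ∈ Icc σ τ, -(ε + θ * ∫ t, A t) ≤ p t := by
    intro t ht
    have h1 := hp σ t le_rfl ht.1 ht.2
    have h2 := int_le hA hA0 (hf.comp cu) ht.1
      (fun x hx => hθ (u x) ((hmax x ⟨hx.1, hx.2.trans ht.2⟩).trans hN2)) hθ0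
    simp only [Function.comp] at h2
    linarith
  have hp3 : ∀ t ∈ Icc τ σ', -(ε + θ * ∫ t, A t) ≤ p t := by
    intro t ht
    have h1 := hp2 τ t le_rfl ht.1 ht.2
    have := mul_nonneg hμ (int_nonneg (v := fun t => f (u t)) hB0 ht.1 fun t => hfn _)
    have := hp1 τ ⟨hst, le_rfl⟩
    linarith
  refine ⟨?_, hp3⟩
  intro t ht
  have hAI : 0 ≤ ∫ t, A t := integral_nonneg hA0
  have h1 := mv_ge du (hz.2.trans ht.1) (c := -(ε + θ * ∫ t, A t)) (by
    intro q hq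
    rcases le_total q τ with h | h
    · exact hp1 q ⟨hz.1.trans hq.1, h⟩
    · exact hp3 q ⟨h, hq.2.trans ht.2⟩)
  have h2 : (ε + θ * ∫ t, A t) * (t - z) ≤ (ε + θ * ∫ t, A t) * L := by
    apply mul_le_mul_of_nonneg_left _ (by positivity)
    linarith [hz.1, ht.2]
  linarith

theorem mid_big {u p B f : ℝ → ℝ} {τ σ' δ κ ε' μ c r M : ℝ}
    (du : ∀ t, HasDerivAt u (p t) t)
    (hB : Integrable B) (hB0 : ∀ t, 0 ≤ B t) (hf : Continuous f) (hfn : ∀ x, 0 ≤ f x)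
    (hμ : 0 ≤ μ)
    (hp2 : ∀ x y, τ ≤ x → x ≤ y → y ≤ σ' → p y - p x = μ * ∫ t in x..y, B t * f (u t))
    (hδ : 0 < δ) (hδ2 : δ < σ' - τ) (hκ : κ ≤ ∫ t in τ..(σ' - δ), B t)
    (hlow : ∀ t ∈ Icc τ σ', r / 4 ≤ u t) (hpτ : -ε' ≤ p τ) (hεδ : ε' * δ ≤ r / 4)
    (hc0 : 0 < c) (hc : ∀ x ≥ r / 4, c ≤ f x) (hbig : M ≤ μ * c * κ * δ) : M ≤ u σ' := by
  have cu : Continuous u := continuous_iff_continuousAt.2 fun t => (du t).continuousAt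
  have h1 := int_ge hB hB0 (hf.comp cu) (by linarith : τ ≤ σ' - δ)
    (fun t ht => hc (u t) (hlow t ⟨ht.1, by linarith [ht.2]⟩))
  simp only [Function.comp] at h1
  have h2 := hp2 τ (σ' - δ) le_rfl (by linarith) (by linarith)
  have h4 : μ * (c * κ) ≤ μ * ∫ t in τ..(σ' - δ), B t * f (u t) :=
    mul_le_mul_of_nonneg_left ((mul_le_mul_of_nonneg_left hκ hc0.le).trans h1) hμ
  have h5 := mv_ge du (by linarith : σ' - δ ≤ σ') (c := μ * c * κ - ε') (by
    intro q hq
    have h6 := hp2 (σ' - δ) q (by linarith) hq.1 hq.2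
    have := mul_nonneg hμ (int_nonneg (v := fun t => f (u t)) hB0 hq.1 fun t => hfn _)
    linarith)
  have h6 := hlow (σ' - δ) ⟨by linarith, by linarith⟩
  rw [sub_sub_cancel] at h5
  nlinarith

theorem big_start {u p A f : ℝ → ℝ} {σ τ δ M C S : ℝ} (du : ∀ t, HasDerivAt u (p t) t)
    (hA : Integrable A) (hA0 : ∀ t, 0 ≤ A t) (hf : Continuous f)
    (hp : ∀ x y, σ ≤ x → x ≤ y → y ≤ τ → p y - p x = - ∫ t in x..y, A t * f (u t))
    (hδ : 0 < δ) (hδ2 : 2 * δ < τ - σ)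
    (hC : ∀ x ≤ M, f x ≤ C) (hC0 : 0 ≤ C) (hM : 0 < M)
    (hu : 0 ≤ u σ) (hpS : S ≤ p σ) (hS : M / δ + C * ∫ t, A t ≤ S) :
    ∃ x ∈ Icc σ τ, M ≤ u x := by
  by_contra! hcon
  have cu : Continuous u := continuous_iff_continuousAt.2 fun t => (du t).continuousAt
  have h1 := mv_ge du (by linarith : σ ≤ τ) (c := M / δ) (by
    intro q hq
    have h2 := hp σ q le_rfl hq.1 hq.2
    have h3 := int_le hA hA0 (hf.comp cu) hq.1
      (fun t ht => hC (u t) (hcon t ⟨ht.1, ht.2.trans hq.2⟩).le) hC0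
    simp only [Function.comp] at h3
    linarith)
  have h2 := hcon τ ⟨by linarith, le_rfl⟩
  have h3 : M ≤ M / δ * (τ - σ) := by
    have h4 : M / δ * δ = M := div_mul_cancel₀ _ hδ.ne'
    have : 0 < M / δ := by positivity
    nlinarith
  linarith


structure Cf where
  (a b : ℝ) (m : ℕ) (σ τ : ℕ → ℝ) (A B : ℝ → ℝ)
  (δ κ M C K Y r θ ρ c ε S μ : ℝ)
  hab : a < b
  hm : 1 ≤ m
  hA : Integrable A
  hB : Integrable B
  hA0 : ∀ t, 0 ≤ A t
  hB0 : ∀ t, 0 ≤ B t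
  hAout : ∀ x, x ∉ Icc a b → A x = 0
  hBout : ∀ x, x ∉ Icc a b → B x = 0
  posB : ∀ i, 1 ≤ i → i ≤ m → ∀ᵐ t, t ∈ Icc (σ i) (τ i) → B t = 0
  negA : ∀ i ≤ m, ∀ᵐ t, t ∈ Icc (τ i) (σ (i+1)) → A t = 0
  hτ0 : τ 0 = a
  hσl : σ (m+1) = b
  le1 : ∀ i ≤ m, τ i ≤ σ (i+1)
  lt1 : ∀ i, 1 ≤ i → i < m → τ i < σ (i+1)
  hδ : 0 < δ
  hκ : 0 < κ
  hδ1 : ∀ i, 1 ≤ i → i ≤ m → 2 * δ < τ i - σ i ∧ κ ≤ ∫ t in (σ i + δ)..(τ i - δ), A t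
  hδ2 : ∀ i ≤ m, τ i < σ (i+1) → δ < σ (i+1) - τ i ∧ κ ≤ ∫ t in (τ i)..(σ (i+1) - δ), B t
  hM : 0 < M
  hC : 0 ≤ C
  hK : 0 ≤ K
  hYM : Y * (b - a) ≤ M * δ
  hbig : 2 * (b - a) < K * κ * δ ^ 2
  hr : 0 < r
  hrM : r ≤ M
  hθ : 0 ≤ θ
  hc : 0 < c
  hε : 0 < ε
  hsm : (ε + θ * ∫ t, A t) * (b - a) ≤ r / 4
  hρ1 : ρ ≤ ε * δ
  hρ2 : ρ ≤ r / 4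
  hμ : 0 ≤ μ
  hμ1 : M / δ + C * ∫ t, A t ≤ μ * c * κ
  hμ2 : M ≤ μ * c * κ * δ
  hS : M / δ + C * ∫ t, A t ≤ S

structure Nl (Q : Cf) (f : ℝ → ℝ) (K1 : ℝ) : Prop where
  cont : Continuous f
  nonneg : ∀ x, 0 ≤ f x
  zero : ∀ x ≤ 0, f x = 0
  K1n : 0 ≤ K1
  lin : ∀ x, |f x| ≤ K1 * |x|
  hC : ∀ x ≤ Q.M, f x ≤ Q.C
  hK : ∀ x ≥ Q.Y, Q.K * x ≤ f x
  hθ : ∀ x ≤ Q.r, f x ≤ Q.θ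
  hc : ∀ x ≥ Q.ρ, Q.c ≤ f x

namespace Cf
variable (Q : Cf)

def W : ℝ → ℝ := fun x => Q.A x - Q.μ * Q.B x

theorem hW : Integrable Q.W := Q.hA.sub (Q.hB.const_mul _)

theorem hWout : ∀ x, x ∉ Icc Q.a Q.b → Q.W x = 0 := fun x hx => by
  simp [W, Q.hAout x hx, Q.hBout x hx]

theorem lt0 {i : ℕ} (h1 : 1 ≤ i) (h2 : i ≤ Q.m) : Q.σ i < Q.τ i := by
  have := (Q.hδ1 i h1 h2).1; have := Q.hδ; linarith

theorem τmono {i j : ℕ} (hij : i ≤ j) (hj : j ≤ Q.m) : Q.τ i ≤ Q.τ j := by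
  induction j, hij using Nat.le_induction with
  | base => exact le_rfl
  | succ n hn ih =>
    exact (ih (by omega)).trans ((Q.le1 n (by omega)).trans (Q.lt0 (by omega) hj).le)

theorem aτ {i : ℕ} (hi : i ≤ Q.m) : Q.a ≤ Q.τ i := by
  have := Q.τmono (Nat.zero_le i) hi
  rwa [Q.hτ0] at this

theorem τb {i : ℕ} (hi : i ≤ Q.m) : Q.τ i ≤ Q.b := by
  have := Q.le1 Q.m le_rfl
  rw [Q.hσl] at this
  exact (Q.τmono hi le_rfl).trans this

theorem aσ {i : ℕ} (hi : i ≤ Q.m) : Q.a ≤ Q.σ (i+1) := (Q.aτ hi).trans (Q.le1 i hi)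

theorem aσ' {i : ℕ} (h1 : 1 ≤ i) (hi : i ≤ Q.m) : Q.a ≤ Q.σ i := by
  obtain ⟨j, rfl⟩ : ∃ j, i = j + 1 := ⟨i - 1, by omega⟩
  exact Q.aσ (by omega)

theorem σb {i : ℕ} (hi : i ≤ Q.m) : Q.σ (i+1) ≤ Q.b := by
  rcases hi.eq_or_lt with rfl | h
  · exact Q.hσl.le
  · exact (Q.lt0 (by omega) (by omega : i + 1 ≤ Q.m)).le.trans (Q.τb (by omega))

end Cf

noncomputable def mx (u : ℝ → ℝ) (x y : ℝ) : ℝ := sSup (u '' Icc x y)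

theorem mx_le {u : ℝ → ℝ} (hu : Continuous u) {x y : ℝ} :
    ∀ t ∈ Icc x y, u t ≤ mx u x y := fun t ht =>
  le_csSup (isCompact_Icc.image hu).bddAbove ⟨t, ht, rfl⟩

theorem mx_mem {u : ℝ → ℝ} (hu : Continuous u) {x y : ℝ} (hxy : x ≤ y) :
    ∃ z ∈ Icc x y, u z = mx u x y := by
  have := (isCompact_Icc.image hu).sSup_mem ((nonempty_Icc.2 hxy).image u)
  exact this

section one
variable {Q : Cf} {f : ℝ → ℝ} {K1 s : ℝ} {u p : ℝ → ℝ}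

theorem pos_diff (hN : Nl Q f K1) (S : Sol Q.a Q.W f s u p) {i : ℕ} (h1 : 1 ≤ i) (h2 : i ≤ Q.m) :
    ∀ x y, Q.σ i ≤ x → x ≤ y → y ≤ Q.τ i → p y - p x = - ∫ t in x..y, Q.A t * f (u t) := by
  intro x y hx hxy hy
  rw [S.pdiff Q.hW hN.cont x y]
  congr 1
  apply intervalIntegral.integral_congr_ae
  filter_upwards [Q.posB i h1 h2] with t ht htm
  rw [uIoc_of_le hxy] at htm
  have := ht ⟨by linarith [htm.1], by linarith [htm.2]⟩
  simp [Cf.W, this]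

theorem neg_diff (hN : Nl Q f K1) (S : Sol Q.a Q.W f s u p) {i : ℕ} (h2 : i ≤ Q.m) :
    ∀ x y, Q.τ i ≤ x → x ≤ y → y ≤ Q.σ (i+1) →
      p y - p x = Q.μ * ∫ t in x..y, Q.B t * f (u t) := by
  intro x y hx hxy hy
  rw [S.pdiff Q.hW hN.cont x y, ← intervalIntegral.integral_const_mul,
    ← intervalIntegral.integral_neg]
  apply intervalIntegral.integral_congr_ae
  filter_upwards [Q.negA i h2] with t ht htm
  rw [uIoc_of_le hxy] at htm
  have := ht ⟨by linarith [htm.1], by linarith [htm.2]⟩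
  simp [Cf.W, this]; ring

theorem neg_mono (hN : Nl Q f K1) (S : Sol Q.a Q.W f s u p) {i : ℕ} (h2 : i ≤ Q.m) :
    ∀ x y, Q.τ i ≤ x → x ≤ y → y ≤ Q.σ (i+1) → p x ≤ p y := by
  intro x y hx hxy hy
  have h := neg_diff hN S h2 x y hx hxy hy
  have := mul_nonneg Q.hμ (int_nonneg (v := fun t => f (u t)) Q.hB0 hxy fun t => hN.nonneg _)
  linarith

theorem b1 (hN : Nl Q f K1) (S : Sol Q.a Q.W f s u p) {i : ℕ} (h1 : 1 ≤ i) (h2 : i ≤ Q.m)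
    (hu : 0 ≤ u (Q.τ i)) : ∀ x ∈ Icc (Q.σ i) (Q.τ i), u x < Q.M := by
  have hnn := S.nonneg_of Q.hW hN.cont hN.zero hu
  have h3 := Q.aσ' h1 h2
  have h4 := Q.τb h2
  exact no_big S.du Q.hA Q.hA0 hN.cont hN.nonneg (pos_diff hN S h1 h2) Q.hδ (Q.hδ1 i h1 h2).1
    (by linarith : Q.τ i - Q.σ i ≤ Q.b - Q.a) (Q.hδ1 i h1 h2).2 Q.hK hN.hK Q.hM Q.hYM Q.hbig
    fun x hx => hnn x ⟨h3.trans hx.1, hx.2⟩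

theorem b1' (hN : Nl Q f K1) (S : Sol Q.a Q.W f s u p) {i : ℕ} (h1 : 1 ≤ i) (h2 : i ≤ Q.m)
    (hu : Q.M ≤ mx u (Q.σ i) (Q.τ i)) : u (Q.τ i) < 0 := by
  by_contra! hc
  obtain ⟨z, hz, e⟩ := mx_mem S.cu (Q.lt0 h1 h2).le
  have := b1 hN S h1 h2 hc z hz
  linarith

theorem b2 (hN : Nl Q f K1) (S : Sol Q.a Q.W f s u p) (hs : 0 ≤ s) {i : ℕ} (h2 : i < Q.m)
    (hu : 0 ≤ u (Q.σ (i+1))) : -Q.ε ≤ p (Q.σ (i+1)) := by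
  rcases Nat.eq_zero_or_pos i with rfl | h1
  · have := neg_mono hN S (Nat.zero_le _) Q.a (Q.σ (0+1)) Q.hτ0.le (Q.aσ (Nat.zero_le _)) le_rfl
    rw [S.pa] at this
    linarith [Q.hε]
  · have hnn := S.nonneg_of Q.hW hN.cont hN.zero hu
    have hlt := Q.lt1 i h1 h2
    have huτ : 0 ≤ u (Q.τ i) := hnn _ ⟨Q.aτ h2.le, hlt.le⟩
    have hD := slope_lb S.du Q.hA Q.hA0 hN.cont (pos_diff hN S h1 h2.le) Q.hδ (Q.hδ1 i h1 h2.le).1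
      hN.hC Q.hC Q.hM (fun x hx => hnn x ⟨(Q.aσ' h1 h2.le).trans hx.1, hx.2.trans hlt.le⟩)
      (fun x hx => (b1 hN S h1 h2.le huτ x hx).le)
    exact slope_small S.du Q.hB Q.hB0 hN.cont hN.nonneg Q.hμ (neg_diff hN S h2.le) Q.hδ
      (Q.hδ2 i h2.le hlt).1 Q.hε (Q.hδ2 i h2.le hlt).2 Q.hc hN.hc Q.hρ1 hD Q.hμ1 hu

theorem b3 (hN : Nl Q f K1) (S : Sol Q.a Q.W f s u p) (hs : 0 ≤ s) {i : ℕ} (h2 : i < Q.m)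
    (hu : 0 ≤ u (Q.σ (i+1))) (hr1 : Q.r / 2 ≤ mx u (Q.σ (i+1)) (Q.τ (i+1)))
    (hr2 : mx u (Q.σ (i+1)) (Q.τ (i+1)) ≤ Q.r) :
    Q.r / 4 ≤ u (Q.σ (i+2)) ∧ (i + 1 < Q.m → Q.M ≤ u (Q.σ (i+2))) := by
  have h2' : i + 1 ≤ Q.m := h2
  have h1' : 1 ≤ i + 1 := by omega
  have hps := b2 hN S hs h2 hu
  have hlt := Q.lt0 h1' h2'
  obtain ⟨z, hz, e⟩ := mx_mem S.cu hlt.le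
  have h3 := Q.aσ h2.le
  have h4 := Q.σb h2'
  have h5 := Q.le1 _ h2'
  have key := mid_low S.du Q.hA Q.hA0 Q.hB0 hN.cont hN.nonneg Q.hμ hlt.le (pos_diff hN S h1' h2')
    (neg_diff hN S h2') Q.hε hps (by linarith : Q.σ (i+1+1) - Q.σ (i+1) ≤ Q.b - Q.a) Q.hθ hN.hθ Q.hsm hz e
    (mx_le S.cu) hr1 hr2
  refine ⟨key.1 _ ⟨h5, le_rfl⟩, fun him => ?_⟩
  have hlt2 := Q.lt1 (i+1) h1' him
  have hd := Q.hδ2 (i+1) h2' hlt2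
  refine mid_big S.du Q.hB Q.hB0 hN.cont hN.nonneg Q.hμ (neg_diff hN S h2') Q.hδ hd.1 hd.2 key.1
    (key.2 _ ⟨le_rfl, h5⟩) ?_ Q.hc (fun x hx => hN.hc x (Q.hρ2.trans hx)) Q.hμ2
  refine le_trans ?_ Q.hsm
  apply mul_le_mul_of_nonneg_left
  · linarith [hd.1]
  · have := Q.hε; have := Q.hθ; have : 0 ≤ ∫ t, Q.A t := integral_nonneg Q.hA0
    positivity

theorem b4 (hN : Nl Q f K1) (S : Sol Q.a Q.W f s u p) {t : ℝ} (hu : u t = 0) (hp : p t ≤ 0) :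
    ∀ x ≥ t, u x ≤ 0 := by
  rcases hp.eq_or_lt with h | h
  · intro x _
    refine (S.zero_all Q.hW hN.cont hN.K1n (fun x => ?_) hu h x).1.le
    rw [abs_mul, mul_comm]
    exact mul_le_mul_of_nonneg_right (hN.lin _) (abs_nonneg _)
  · intro x hx
    rcases hx.eq_or_lt with e | hlt
    · rw [← e, hu]
    · exact (S.neg_fwd Q.hW hN.cont hN.zero hu.le h x hlt).le

theorem b5 (hN : Nl Q f K1) (S : Sol Q.a Q.W f s u p) (hs : 0 ≤ s) (hb : u Q.b = 0)
    {i : ℕ} (h2 : i < Q.m) (hr2 : mx u (Q.σ (i+1)) (Q.τ (i+1)) ≤ Q.r) :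
    mx u (Q.σ (i+1)) (Q.τ (i+1)) < Q.r / 2 := by
  by_contra! hr1
  have hnn := S.nonneg_of Q.hW hN.cont hN.zero hb.ge
  have h := b3 hN S hs h2 (hnn _ ⟨Q.aσ h2.le, Q.σb h2.le⟩) hr1 hr2
  rcases (show i + 1 ≤ Q.m from h2).eq_or_lt with e | hlt
  · have : Q.σ (i+2) = Q.b := by rw [← Q.hσl, ← e]
    rw [this, hb] at h
    linarith [h.1, Q.hr]
  · have h3 := h.2 hlt
    have := b1' hN S (by omega : 1 ≤ i + 2) hlt
      (h3.trans (mx_le S.cu _ ⟨le_rfl, (Q.lt0 (by omega) hlt).le⟩))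
    have := hnn _ ⟨Q.aτ hlt, Q.τb hlt⟩
    linarith

theorem b6 (hN : Nl Q f K1) (S : Sol Q.a Q.W f s u p) (hb : u Q.b = 0) :
    ∀ x ∈ Icc Q.a Q.b, 0 ≤ u x ∧ u x ≤ Q.M := by
  have hnn := S.nonneg_of Q.hW hN.cont hN.zero hb.ge
  have hpI : ∀ i, 1 ≤ i → i ≤ Q.m → ∀ x ∈ Icc (Q.σ i) (Q.τ i), u x ≤ Q.M := fun i h1 h2 x hx =>
    (b1 hN S h1 h2 (hnn _ ⟨Q.aτ h2, Q.τb h2⟩) x hx).le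
  have hτM : ∀ i ≤ Q.m, u (Q.τ i) ≤ Q.M := by
    intro i hi
    rcases Nat.eq_zero_or_pos i with rfl | h1
    · rw [Q.hτ0, S.u0]; exact Q.hM.le
    · exact hpI i h1 hi _ ⟨(Q.lt0 h1 hi).le, le_rfl⟩
  have hσM : ∀ i ≤ Q.m, u (Q.σ (i+1)) ≤ Q.M := by
    intro i hi
    rcases hi.eq_or_lt with rfl | h1
    · rw [Q.hσl, hb]; exact Q.hM.le
    · exact hpI (i+1) (by omega) h1 _ ⟨le_rfl, (Q.lt0 (by omega) h1).le⟩
  have hneg : ∀ i ≤ Q.m, ∀ x ∈ Icc (Q.τ i) (Q.σ (i+1)), u x ≤ Q.M := by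
    intro i hi x hx
    rcases le_total 0 (p x) with h | h
    · have := mv_ge S.du hx.2 (c := 0) fun q hq => h.trans (neg_mono hN S hi x q hx.1 hq.1 hq.2)
      linarith [hσM i hi]
    · have := mv_le S.du hx.1 (c := 0) fun q hq => (neg_mono hN S hi q x hq.1 hq.2 hx.2).trans h
      linarith [hτM i hi]
  have key : ∀ k ≤ Q.m, ∀ x ∈ Icc Q.a (Q.σ (k+1)), u x ≤ Q.M := by
    intro k
    induction k with
    | zero => intro h x hx; exact hneg 0 h x (by rw [Q.hτ0]; exact hx)
    | succ k ih =>
      intro h x hx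
      rcases le_total x (Q.σ (k+1)) with h1 | h1
      · exact ih (by omega) x ⟨hx.1, h1⟩
      · rcases le_total x (Q.τ (k+1)) with h3 | h3
        · exact hpI (k+1) (by omega) h x ⟨h1, h3⟩
        · exact hneg (k+1) h x ⟨h3, hx.2⟩
  intro x hx
  exact ⟨hnn x hx, key Q.m le_rfl x (by rw [Q.hσl]; exact hx)⟩

end one

theorem ivt_first_aux {f : ℝ → ℝ} (hf : Continuous f) {x y v : ℝ} (hxy : x ≤ y) (h1 : v ≤ f x)
    (h2 : f y ≤ v) : ∃ z ∈ Icc x y, f z = v ∧ ∀ w ∈ Icc x z, v ≤ f w := by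
  set Z := {w | w ∈ Icc x y ∧ f w ≤ v} with hZ
  have hZc : IsClosed Z := isClosed_Icc.inter (isClosed_le hf continuous_const)
  have hZne : Z.Nonempty := ⟨y, ⟨hxy, le_rfl⟩, h2⟩
  have hZb : BddBelow Z := ⟨x, fun w hw => hw.1.1⟩
  have hm := hZc.csInf_mem hZne hZb
  set z := sInf Z
  have hbef : ∀ w, x ≤ w → w < z → v ≤ f w := by
    intro w hw hwz
    by_contra! hc
    have := csInf_le hZb (⟨⟨hw, hwz.le.trans hm.1.2⟩, hc.le⟩ : w ∈ Z)
    linarith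
  have hz : v ≤ f z := by
    rcases hm.1.1.eq_or_lt with e | hlt
    · rw [← e]; exact h1
    · have : Tendsto f (𝓝[<] z) (𝓝 (f z)) := hf.continuousAt.continuousWithinAt
      apply ge_of_tendsto this
      filter_upwards [Ioo_mem_nhdsLT hlt] with w hw
      exact hbef w hw.1.le hw.2
  refine ⟨z, hm.1, le_antisymm hm.2 hz, fun w hw => ?_⟩
  rcases hw.2.eq_or_lt with e | hlt
  · rw [e]; exact hz
  · exact hbef w hw.1 hlt

theorem ivt_first {f : ℝ → ℝ} (hf : Continuous f) {x y v : ℝ} (h1 : v ≤ f x)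
    (h2 : f y ≤ v) : ∃ z ∈ uIcc x y, f z = v ∧ ∀ w ∈ uIcc x z, v ≤ f w := by
  rcases le_total x y with h | h
  · obtain ⟨z, hz, e, hw⟩ := ivt_first_aux hf h h1 h2
    refine ⟨z, by rwa [uIcc_of_le h], e, ?_⟩
    rwa [uIcc_of_le hz.1]
  · obtain ⟨z, hz, e, hw⟩ := ivt_first_aux (f := fun t => f (-t)) (by fun_prop)
      (neg_le_neg h) (by simpa using h1) (by simpa using h2)
    refine ⟨-z, ?_, e, ?_⟩
    · rw [uIcc_of_ge h]; constructor <;> linarith [hz.1, hz.2]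
    · intro w hw'
      rw [uIcc_of_ge (by linarith [hz.1])] at hw'
      have := hw (-w) ⟨by linarith [hw'.2], by linarith [hw'.1]⟩
      simpa using this

theorem mx_lip {U : ℝ → ℝ → ℝ} (hU : ∀ s, Continuous (U s)) {x y c : ℝ} (hxy : x ≤ y)
    (h : ∀ s s', ∀ t ∈ Icc x y, |U s t - U s' t| ≤ c * |s - s'|) :
    Continuous fun s => mx (U s) x y := by
  have h0 : ∀ s s', mx (U s) x y - mx (U s') x y ≤ c * |s - s'| := by
    intro s s'
    obtain ⟨z, hz, e⟩ := mx_mem (hU s) hxy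
    have := mx_le (hU s') z hz
    have := (abs_le.1 (h s s' z hz)).2
    linarith
  apply LipschitzWith.continuous (K := c.toNNReal)
  apply LipschitzWith.of_dist_le_mul
  intro s s'
  rw [Real.dist_eq, Real.dist_eq]
  have hc : c * |s - s'| ≤ c.toNNReal * |s - s'| :=
    mul_le_mul_of_nonneg_right (Real.le_coe_toNNReal c) (abs_nonneg _)
  rw [abs_le]
  have h1 := h0 s s'
  have h2 := h0 s' s
  rw [abs_sub_comm] at h2
  constructor <;> linarith

theorem path {Q : Cf} {f : ℝ → ℝ} {K1 : ℝ} (hN : Nl Q f K1) {U P : ℝ → ℝ → ℝ}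
    (hS : ∀ s, Sol Q.a Q.W f s (U s) (P s)) {cl : ℝ}
    (hl : ∀ s s', ∀ t ∈ Icc Q.a Q.b, |U s t - U s' t| ≤ cl * |s - s'|) (c : ℕ → Prop) :
    ∀ k ≤ Q.m, ∃ s0 s1, (∀ s ∈ uIcc s0 s1, 0 ≤ s ∧ s ≤ Q.S ∧ 0 ≤ U s (Q.σ (k+1)) ∧
        ∀ i < k, (c i → Q.r ≤ mx (U s) (Q.σ (i+1)) (Q.τ (i+1))) ∧
          (¬ c i → mx (U s) (Q.σ (i+1)) (Q.τ (i+1)) ≤ Q.r)) ∧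
      (k < Q.m → Q.M ≤ mx (U s0) (Q.σ (k+1)) (Q.τ (k+1))) ∧
      U s1 (Q.σ (k+1)) = 0 ∧ P s1 (Q.σ (k+1)) ≤ 0 := by
  have hct : ∀ t ∈ Icc Q.a Q.b, Continuous fun s => U s t := by
    intro t ht
    apply LipschitzWith.continuous (K := cl.toNNReal)
    apply LipschitzWith.of_dist_le_mul
    intro s s'
    rw [Real.dist_eq, Real.dist_eq]
    exact (hl s s' t ht).trans (mul_le_mul_of_nonneg_right (Real.le_coe_toNNReal cl) (abs_nonneg _))
  have hcm : ∀ i < Q.m, Continuous fun s => mx (U s) (Q.σ (i+1)) (Q.τ (i+1)) := by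
    intro i hi
    apply mx_lip (fun s => (hS s).cu) (Q.lt0 (by omega) hi).le (c := cl)
    intro s s' t ht
    exact hl s s' t ⟨(Q.aσ hi.le).trans ht.1, ht.2.trans (Q.τb hi)⟩
  have hI : 0 ≤ ∫ t, Q.A t := integral_nonneg Q.hA0
  have hS0 : 0 ≤ Q.S := by
    refine le_trans ?_ Q.hS
    have := Q.hM; have := Q.hδ; have := Q.hC
    positivity
  intro k
  induction k with
  | zero =>
    intro _
    have hz := (hS 0).zero_all Q.hW hN.cont hN.K1n (fun x => by
      rw [abs_mul, mul_comm]
      exact mul_le_mul_of_nonneg_right (hN.lin _) (abs_nonneg _)) (hS 0).u0 (hS 0).pa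
    have hmono : ∀ s, ∀ q ∈ Icc Q.a (Q.σ (0+1)), s ≤ P s q := by
      intro s q hq
      have := neg_mono hN (hS s) (Nat.zero_le _) Q.a q Q.hτ0.le hq.1 hq.2
      rwa [(hS s).pa] at this
    have hgrow : ∀ s, 0 ≤ s → 0 ≤ U s (Q.σ (0+1)) := by
      intro s hs
      have h1 := mv_ge (hS s).du (Q.aσ (Nat.zero_le _)) (hmono s)
      rw [(hS s).u0] at h1
      have := Q.aσ (Nat.zero_le _)
      nlinarith
    refine ⟨Q.S, 0, ?_, ?_, (hz _).1, (hz _).2.le⟩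
    · intro s hs
      rw [uIcc_of_ge hS0] at hs
      exact ⟨hs.1, hs.2, hgrow s hs.1, fun i hi => absurd hi (by omega)⟩
    · intro h
      obtain ⟨x, hx, hMx⟩ := big_start (hS Q.S).du Q.hA Q.hA0 hN.cont
        (pos_diff hN (hS Q.S) (le_refl 1) Q.hm) Q.hδ (Q.hδ1 1 le_rfl Q.hm).1 hN.hC Q.hC Q.hM
        (hgrow _ hS0) (hmono Q.S _ ⟨Q.aσ (Nat.zero_le _), le_rfl⟩) Q.hS
      exact hMx.trans (mx_le (hS _).cu x hx)
  | succ k ih =>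
    intro hk
    obtain ⟨s0, s1, hall, hM0, hu1, hp1⟩ := ih (by omega)
    have hkm : k < Q.m := hk
    have hM0 := hM0 hkm
    have hσσ : Q.σ (k+1) ≤ Q.τ (k+1) := (Q.lt0 (by omega) hk).le
    have hts : Q.τ (k+1) ≤ Q.σ (k+2) := Q.le1 (k+1) hk
    -- endpoints are nonpositive at the next σ
    have he0 : U s0 (Q.σ (k+2)) ≤ 0 :=
      ((hS s0).neg_stay Q.hW hN.cont hN.zero (Q.aτ hk) (b1' hN (hS s0) (by omega) hk hM0) _ hts).le
    have hneg1 := b4 hN (hS s1) hu1 hp1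
    have he1 : U s1 (Q.σ (k+2)) ≤ 0 := hneg1 _ (hσσ.trans hts)
    have hm1 : mx (U s1) (Q.σ (k+1)) (Q.τ (k+1)) ≤ Q.r := by
      obtain ⟨z, hz, e⟩ := mx_mem (hS s1).cu hσσ
      rw [← e]; exact (hneg1 z hz.1).trans Q.hr.le
    have hr0 : Q.r ≤ mx (U s0) (Q.σ (k+1)) (Q.τ (k+1)) := Q.hrM.trans hM0
    -- the splitting point
    have hsplit : ∃ q ∈ uIcc s0 s1, ∃ e ∈ uIcc s0 s1, U e (Q.σ (k+2)) ≤ 0 ∧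
        mx (U q) (Q.σ (k+1)) (Q.τ (k+1)) = Q.r ∧
        ∀ w ∈ uIcc q e, (c k → Q.r ≤ mx (U w) (Q.σ (k+1)) (Q.τ (k+1))) ∧
          (¬ c k → mx (U w) (Q.σ (k+1)) (Q.τ (k+1)) ≤ Q.r) := by
      by_cases hc : c k
      · obtain ⟨q, hq, e, hw⟩ := ivt_first (hcm k hkm) hr0 hm1
        refine ⟨q, hq, s0, left_mem_uIcc, he0, e, fun w hw' => ⟨fun _ => hw w ?_, fun h => absurd hc h⟩⟩
        rwa [uIcc_comm] at hw'
      · obtain ⟨q, hq, e, hw⟩ := ivt_first (hcm k hkm).neg (neg_le_neg hm1) (neg_le_neg hr0)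
        refine ⟨q, by rwa [uIcc_comm] at hq, s1, right_mem_uIcc, he1, neg_injective e,
          fun w hw' => ⟨fun h => absurd h hc, fun _ => ?_⟩⟩
        rw [uIcc_comm] at hw'
        exact neg_le_neg_iff.1 (hw w hw')
    obtain ⟨q, hq, e, he, hUe, hmq, hqe⟩ := hsplit
    have hall_q := hall q hq
    have hQ := b3 hN (hS q) hall_q.1 hkm hall_q.2.2.1 (by rw [hmq]; linarith [Q.hr]) hmq.le
    have hσab : Q.σ (k+2) ∈ Icc Q.a Q.b := ⟨Q.aσ hk, Q.σb hk⟩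
    obtain ⟨z, hz, hUz, hzw⟩ := ivt_first (hct _ hσab) (v := 0) (by linarith [hQ.1, Q.hr]) hUe
    have hsub : uIcc q z ⊆ uIcc s0 s1 := by
      apply uIcc_subset_uIcc hq
      exact (uIcc_subset_uIcc hq he) hz
    refine ⟨q, z, ?_, ?_, hUz, ?_⟩
    · intro s hs
      have h1 := hall s (hsub hs)
      refine ⟨h1.1, h1.2.1, hzw s hs, fun i hi => ?_⟩
      rcases Nat.lt_succ_iff_lt_or_eq.1 hi with h | rfl
      · exact h1.2.2.2 i h
      · exact hqe s (uIcc_subset_uIcc left_mem_uIcc hz hs)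
    · intro h
      exact (hQ.2 h).trans (mx_le (hS q).cu _ ⟨le_rfl, (Q.lt0 (by omega) h).le⟩)
    · -- slope ≤ 0
      by_contra! hpz
      have hnn := (hS z).nonneg_of Q.hW hN.cont hN.zero hUz.ge
      have hlt : Q.a < Q.σ (k+2) :=
        (Q.aσ hkm.le).trans_lt ((Q.lt0 (by omega) hk).trans_le hts)
      have hev : ∀ᶠ x in 𝓝 (Q.σ (k+2)), 0 < P z x := continuousAt_const.eventually_lt
        ((hS z).cp Q.hW hN.cont).continuousAt hpz
      obtain ⟨d, hd, hdd⟩ := Metric.eventually_nhds_iff.1 hev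
      set x := max Q.a (Q.σ (k+2) - d/2) with hx
      have hx1 : x < Q.σ (k+2) := max_lt hlt (by linarith)
      obtain ⟨y, hy, ey⟩ := mv_eq (hS z).du hx1
      have hy2 : 0 < P z y := hdd (by
        have := le_max_right Q.a (Q.σ (k+2) - d/2)
        rw [Real.dist_eq, abs_lt]; constructor <;> linarith [hy.1, hy.2])
      have h1 := hnn x ⟨le_max_left _ _, hx1.le⟩
      have h2 := mul_pos hy2 (sub_pos.2 hx1)
      have h3 : U z (Q.σ (k + 1 + 1)) = 0 := hUz
      change P z y * (Q.σ (k+2) - x) = U z (Q.σ (k+1+1)) - U z x at ey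
      linarith

/-- for Lipschitz nonlinearities: solutions with prescribed itinerary. -/
theorem itinerary {Q : Cf} {f : ℝ → ℝ} {K1 : ℝ} (hN : Nl Q f K1) {Lf : NNReal}
    (hLf : LipschitzWith Lf f) (c : ℕ → Prop) :
    ∃ s u p, Sol Q.a Q.W f s u p ∧ 0 ≤ s ∧ s ≤ Q.S ∧ u Q.b = 0 ∧
      (∀ x ∈ Icc Q.a Q.b, 0 ≤ u x ∧ u x ≤ Q.M) ∧
      ∀ i < Q.m, (c i → Q.r ≤ mx u (Q.σ (i+1)) (Q.τ (i+1))) ∧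
          (¬ c i → mx u (Q.σ (i+1)) (Q.τ (i+1)) ≤ Q.r / 2) := by
  obtain ⟨U, P, hS, cl, hl⟩ := exists_flow Q.a Q.b Q.hab Q.W Q.hW Q.hWout f Lf hLf
  obtain ⟨s0, s1, hall, -, hu, -⟩ := path hN hS hl c Q.m le_rfl
  rw [Q.hσl] at hu
  have h := hall s1 right_mem_uIcc
  refine ⟨s1, U s1, P s1, hS s1, h.1, h.2.1, hu, b6 hN (hS s1) hu, fun i hi => ⟨(h.2.2.2 i hi).1, ?_⟩⟩
  intro hc
  exact (b5 hN (hS s1) h.1 hu hi ((h.2.2.2 i hi).2 hc)).le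


noncomputable def ic (g : ℝ → ℝ) (N : ℝ) (x : ℝ) : ℝ := ⨅ y, (g y + N * |x - y|)

section ic
variable {g : ℝ → ℝ} (hg : ∀ x, 0 ≤ g x) {N : ℝ} (hN : 0 ≤ N)
include hg hN

theorem ic_le (x y : ℝ) : ic g N x ≤ g y + N * |x - y| :=
  ciInf_le ⟨0, by rintro _ ⟨y, rfl⟩; have := hg y; positivity⟩ y

theorem ic_self (x : ℝ) : ic g N x ≤ g x := by simpa using ic_le hg hN x x

theorem le_ic {x c : ℝ} (h : ∀ y, c ≤ g y + N * |x - y|) : c ≤ ic g N x := le_ciInf h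

theorem ic_nonneg (x : ℝ) : 0 ≤ ic g N x :=
  le_ic hg hN fun y => by have := hg y; positivity

theorem ic_lip : LipschitzWith ⟨N, hN⟩ (ic g N) := by
  apply LipschitzWith.of_le_add_mul
  intro x y
  have : ic g N x - N * dist x y ≤ ic g N y := by
    apply le_ic hg hN
    intro z
    have h1 := ic_le hg hN x z
    have h2 : |x - z| ≤ |x - y| + |y - z| := abs_sub_le _ _ _
    have h3 := mul_le_mul_of_nonneg_left h2 hN
    rw [Real.dist_eq]
    linarith
  change ic g N x ≤ ic g N y + N * dist x y
  linarith

theorem ic_low {ρ c : ℝ} (h : ∀ y ≥ ρ / 2, c ≤ g y) (hn : c ≤ N * (ρ / 2)) {x : ℝ} (hx : ρ ≤ x) :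
    c ≤ ic g N x := by
  apply le_ic hg hN
  intro y
  by_cases hy : ρ / 2 ≤ y
  · have := h y hy; have : 0 ≤ N * |x - y| := by positivity
    linarith
  · push Not at hy
    have h1 : ρ / 2 ≤ |x - y| := by
      have := le_abs_self (x - y); linarith
    have := mul_le_mul_of_nonneg_left h1 hN
    linarith [hg y]

theorem ic_sup {K Y : ℝ} (hK : 0 ≤ K) (hY : 0 < Y) (h : ∀ y ≥ Y / 2, 2 * K * y ≤ g y) (hn : 2 * K ≤ N) {x : ℝ} (hx : Y ≤ x) :
    K * x ≤ ic g N x := by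
  apply le_ic hg hN
  intro y
  by_cases hy : x / 2 ≤ y
  · have := h y (by linarith); have : 0 ≤ N * |x - y| := by positivity
    have := mul_le_mul_of_nonneg_left hy (by linarith : 0 ≤ 2 * K)
    linarith
  · push Not at hy
    have h1 : x / 2 ≤ |x - y| := by
      have := le_abs_self (x - y); linarith
    have h2 := mul_le_mul_of_nonneg_left h1 hN
    have h3 := mul_le_mul_of_nonneg_right hn (by linarith : 0 ≤ x / 2)
    linarith [hg y]
end ic

theorem ic_tendsto {g : ℝ → ℝ} (hg : ∀ x, 0 ≤ g x) (hc : Continuous g) (k : ℕ) (x : ℝ) :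
    Tendsto (fun q : ℕ × ℝ => ic g ((q.1 + k : ℕ) : ℝ) q.2) (atTop ×ˢ 𝓝 x) (𝓝 (g x)) := by
  rw [Metric.tendsto_nhds]
  intro e he
  obtain ⟨η, hη, hx⟩ := Metric.continuous_iff.1 hc x (e/2) (by linarith)
  obtain ⟨n0, hn0⟩ := exists_nat_gt ((|g x|) / (η / 2))
  rw [div_lt_iff₀ (by linarith)] at hn0
  filter_upwards [prod_mem_prod (Ici_mem_atTop n0) (Metric.ball_mem_nhds x (by linarith : 0 < η / 2))]
  rintro ⟨n, z⟩ ⟨h1, h2⟩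
  simp only [mem_Ici] at h1
  rw [Metric.mem_ball, Real.dist_eq] at h2
  have hnn : (n0 : ℝ) ≤ ((n + k : ℕ) : ℝ) := by exact_mod_cast (by omega : n0 ≤ n + k)
  have hN : (0:ℝ) ≤ ((n + k : ℕ) : ℝ) := by positivity
  dsimp only
  generalize ((n + k : ℕ) : ℝ) = N at *
  have a1 := ic_self hg hN z
  have a2 := hx z (by rw [Real.dist_eq]; linarith)
  rw [Real.dist_eq, abs_lt] at a2
  have a3 : g x - e / 2 ≤ ic g N z := by
    apply le_ic hg hN
    intro y
    by_cases hy : |y - x| < η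
    · have a4 := hx y (by rwa [Real.dist_eq])
      rw [Real.dist_eq, abs_lt] at a4
      have : 0 ≤ N * |z - y| := by positivity
      linarith
    · push Not at hy
      have h5 : |y - x| ≤ |y - z| + |z - x| := abs_sub_le _ _ _
      rw [abs_sub_comm y z] at h5
      have h6 : η / 2 ≤ |z - y| := by linarith
      have h7 := mul_le_mul hnn h6 (by linarith) hN
      have := le_abs_self (g x)
      linarith [hg y]
  rw [Real.dist_eq, abs_lt]
  constructor <;> linarith


theorem aa {a b D M : ℝ} (hab : a ≤ b) (hD : 0 ≤ D) (u : ℕ → ℝ → ℝ) (hu : ∀ n, Continuous (u n))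
    (hl : ∀ n, ∀ x ∈ Icc a b, ∀ y ∈ Icc a b, |u n x - u n y| ≤ D * |x - y|)
    (hb : ∀ n, ∀ x ∈ Icc a b, 0 ≤ u n x ∧ u n x ≤ M) :
    ∃ V : ℝ → ℝ, Continuous V ∧ ∃ φ : ℕ → ℕ, StrictMono φ ∧
      ∀ e > 0, ∀ᶠ n in atTop, ∀ x ∈ Icc a b, |u (φ n) x - V x| < e := by
  let w : ℕ → BoundedContinuousFunction (Icc a b) ℝ := fun n =>
    BoundedContinuousFunction.mkOfCompact ⟨fun x => u n x, by have := hu n; fun_prop⟩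
  have hw : ∀ n x, w n x = u n x := fun n x => rfl
  have hcpt : IsCompact (closure (range w)) := by
    apply BoundedContinuousFunction.arzela_ascoli (Icc 0 M) isCompact_Icc
    · rintro _ x ⟨n, rfl⟩
      rw [hw]; exact hb n x x.2
    · apply LipschitzWith.uniformEquicontinuous (K := D.toNNReal) _ _ |>.equicontinuous
      rintro ⟨_, n, rfl⟩
      apply LipschitzWith.of_dist_le_mul
      intro x y
      rw [Real.coe_toNNReal D hD, Subtype.dist_eq, Real.dist_eq, Real.dist_eq]
      exact hl n x x.2 y y.2
  obtain ⟨v, -, φ, hφ, hv⟩ := hcpt.tendsto_subseq (x := w) (fun n => subset_closure ⟨n, rfl⟩)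
  refine ⟨IccExtend hab v, v.continuous.Icc_extend', φ, hφ, fun e he => ?_⟩
  filter_upwards [Metric.tendsto_nhds.1 hv e he] with n hn x hx
  have := (BoundedContinuousFunction.dist_coe_le_dist (f := w (φ n)) (g := v) ⟨x, hx⟩).trans_lt hn
  rw [Real.dist_eq] at this
  rw [IccExtend_of_mem hab v hx]
  exact this

theorem lim_sol (Q : Cf) (f : ℕ → ℝ → ℝ) (K1 : ℕ → ℝ) (hN : ∀ n, Nl Q (f n) (K1 n))
    (Lf : ℕ → NNReal) (hL : ∀ n, LipschitzWith (Lf n) (f n)) (g : ℝ → ℝ) (hg : Continuous g)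
    (ht : ∀ x, Tendsto (fun q : ℕ × ℝ => f q.1 q.2) (atTop ×ˢ 𝓝 x) (𝓝 (g x))) (c : ℕ → Prop) :
    ∃ s u p, Sol Q.a Q.W g s u p ∧ u Q.b = 0 ∧ (∀ x ∈ Icc Q.a Q.b, 0 ≤ u x ∧ u x ≤ Q.M) ∧
      ∀ i < Q.m, (c i → Q.r ≤ mx u (Q.σ (i+1)) (Q.τ (i+1))) ∧
        (¬ c i → mx u (Q.σ (i+1)) (Q.τ (i+1)) ≤ Q.r / 2) := by
  have hit := fun n => itinerary (hN n) (hL n) c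
  choose s u p hS hs0 hs1 hub hu01 hc using hit
  have hab := Q.hab
  have hW := Q.hW
  set w1 : ℝ := ∫ x, |Q.W x| with hw1
  have hw1n : 0 ≤ w1 := integral_nonneg fun _ => abs_nonneg _
  have hfb : ∀ n x, |Q.W x * f n (u n x)| ≤ Q.C * |Q.W x| := by
    intro n x
    by_cases hx : x ∈ Icc Q.a Q.b
    · rw [abs_mul, mul_comm, abs_of_nonneg ((hN n).nonneg _)]
      exact mul_le_mul_of_nonneg_right ((hN n).hC _ (hu01 n x hx).2) (abs_nonneg _)
    · simp [Q.hWout x hx]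
  have hint : Integrable fun x => Q.C * |Q.W x| := hW.abs.const_mul _
  have hpb : ∀ n t, |p n t| ≤ Q.S + Q.C * w1 := by
    intro n t
    rw [(hS n).pe t]
    have h1 : |∫ x in Q.a..t, Q.W x * f n (u n x)| ≤ Q.C * w1 := by
      rw [← Real.norm_eq_abs]
      refine (intervalIntegral.norm_integral_le_integral_norm_uIoc).trans ?_
      calc ∫ x in uIoc Q.a t, ‖Q.W x * f n (u n x)‖ ≤ ∫ x in uIoc Q.a t, Q.C * |Q.W x| := by
            apply integral_mono_of_nonneg (Eventually.of_forall fun _ => norm_nonneg _) hint.integrableOn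
            exact Eventually.of_forall fun x => hfb n x
        _ ≤ ∫ x, Q.C * |Q.W x| := by
            apply setIntegral_le_integral hint
            exact Eventually.of_forall fun x => mul_nonneg Q.hC (abs_nonneg _)
        _ = Q.C * w1 := by rw [integral_const_mul]
    have h2 := abs_sub (s n) (∫ x in Q.a..t, Q.W x * f n (u n x))
    have h3 := abs_of_nonneg (hs0 n)
    have := hs1 n
    linarith
  set D := Q.S + Q.C * w1 with hD
  have hD0 : 0 ≤ D := (abs_nonneg _).trans (hpb 0 0)
  have hlip : ∀ n x y, |u n x - u n y| ≤ D * |x - y| := by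
    intro n x y
    have := Convex.norm_image_sub_le_of_norm_hasDerivWithin_le (s := univ) (f := u n) (f' := p n)
      (C := D) (fun x _ => ((hS n).du x).hasDerivWithinAt) (fun x _ => hpb n x) convex_univ
      (mem_univ y) (mem_univ x)
    simpa using this
  obtain ⟨V, hV, φ, hφ, hVu⟩ := aa hab.le hD0 u (fun n => (hS n).cu) (fun n x _ y _ => hlip n x y) hu01
  obtain ⟨s', -, ψ, hψ, hs'⟩ := (isCompact_Icc (a := (0:ℝ)) (b := Q.S)).tendsto_subseq
    (x := fun n => s (φ n)) (fun n => ⟨hs0 _, hs1 _⟩)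
  set χ := fun n => φ (ψ n) with hχ
  have hχt : Tendsto χ atTop atTop := hφ.tendsto_atTop.comp hψ.tendsto_atTop
  have hVu' : ∀ e > 0, ∀ᶠ n in atTop, ∀ x ∈ Icc Q.a Q.b, |u (χ n) x - V x| < e :=
    fun e he => hψ.tendsto_atTop.eventually (hVu e he)
  have hptw : ∀ x ∈ Icc Q.a Q.b, Tendsto (fun n => u (χ n) x) atTop (𝓝 (V x)) := by
    intro x hx
    rw [Metric.tendsto_nhds]
    intro e he
    filter_upwards [hVu' e he] with n hn
    exact hn x hx
  set P : ℝ → ℝ := fun t => s' - ∫ x in Q.a..t, Q.W x * g (V x) with hP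
  have hPc : Continuous P := continuous_const.sub (cont_prim hW (hg.comp hV) Q.a)
  have hpl : ∀ t, Tendsto (fun n => p (χ n) t) atTop (𝓝 (P t)) := by
    intro t
    have : ∀ n, p (χ n) t = s (χ n) - ∫ x in Q.a..t, Q.W x * f (χ n) (u (χ n) x) :=
      fun n => (hS _).pe t
    simp only [this, hP]
    refine Tendsto.sub hs' ?_
    apply intervalIntegral.tendsto_integral_filter_of_dominated_convergence (fun x => Q.C * |Q.W x|)
    · refine Eventually.of_forall fun n => ?_
      exact (hW.aestronglyMeasurable.mul
        (((hN (χ n)).cont.comp (hS (χ n)).cu).aestronglyMeasurable)).restrict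
    · exact Eventually.of_forall fun n => Eventually.of_forall fun x _ => hfb _ x
    · exact hint.intervalIntegrable
    · refine Eventually.of_forall fun x _ => ?_
      by_cases hx : x ∈ Icc Q.a Q.b
      · exact ((ht (V x)).comp (hχt.prodMk (hptw x hx))).const_mul _
      · simp [Q.hWout x hx]
  set U : ℝ → ℝ := fun t => ∫ x in Q.a..t, P x with hU
  have hUd : ∀ t, HasDerivAt U (P t) t := fun t =>
    intervalIntegral.integral_hasDerivAt_right (hPc.intervalIntegrable _ _)
      (hPc.stronglyMeasurableAtFilter _ _) hPc.continuousAt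
  have hUc : Continuous U := continuous_iff_continuousAt.2 fun t => (hUd t).continuousAt
  have hul : ∀ t, Tendsto (fun n => u (χ n) t) atTop (𝓝 (U t)) := by
    intro t
    have : ∀ n, u (χ n) t = ∫ x in Q.a..t, p (χ n) x := fun n => by
      rw [intervalIntegral.integral_eq_sub_of_hasDerivAt (fun x _ => (hS (χ n)).du x)
        (((hS (χ n)).cp hW (hN (χ n)).cont).intervalIntegrable _ _), (hS (χ n)).u0, sub_zero]
    simp only [this, hU]
    apply intervalIntegral.tendsto_integral_filter_of_dominated_convergence (fun x => D)
    · refine Eventually.of_forall fun n => ?_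
      exact ((hS (χ n)).cp hW (hN (χ n)).cont).aestronglyMeasurable
    · exact Eventually.of_forall fun n => Eventually.of_forall fun x _ => hpb _ x
    · exact intervalIntegrable_const
    · exact Eventually.of_forall fun x _ => hpl x
  have hUV : ∀ x ∈ Icc Q.a Q.b, U x = V x := fun x hx => tendsto_nhds_unique (hul x) (hptw x hx)
  have hSU : Sol Q.a Q.W g s' U P := by
    refine ⟨by simp [hU], hUd, fun t => ?_⟩
    simp only [hP]
    congr 1
    apply intervalIntegral.integral_congr
    intro x _
    by_cases hx : x ∈ Icc Q.a Q.b
    · simp only [hUV x hx]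
    · simp [Q.hWout x hx]
  refine ⟨s', U, P, hSU, ?_, ?_, ?_⟩
  · refine tendsto_nhds_unique (hul Q.b) ?_
    simp [hub]
  · intro x hx
    exact ⟨ge_of_tendsto' (hul x) fun n => (hu01 _ x hx).1, le_of_tendsto' (hul x) fun n => (hu01 _ x hx).2⟩
  · intro i hi
    have hst := (Q.lt0 (by omega : 1 ≤ i + 1) hi).le
    have hsub : ∀ t ∈ Icc (Q.σ (i+1)) (Q.τ (i+1)), t ∈ Icc Q.a Q.b := fun t ht =>
      ⟨(Q.aσ hi.le).trans ht.1, ht.2.trans (Q.τb hi)⟩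
    constructor
    · intro hci
      refine le_of_forall_pos_le_add fun e he => ?_
      obtain ⟨n, hn⟩ := (hVu' e he).exists
      have h1 := (hc (χ n) i hi).1 hci
      obtain ⟨z, hz, e1⟩ := mx_mem (hS (χ n)).cu hst
      have h2 := mx_le hUc z hz
      have h3 := (abs_lt.1 (hn z (hsub z hz))).2
      rw [← hUV z (hsub z hz)] at h3
      linarith
    · intro hci
      obtain ⟨z, hz, e1⟩ := mx_mem hUc hst
      rw [← e1]
      exact le_of_tendsto' (hul z) fun n => (mx_le (hS (χ n)).cu z hz).trans ((hc (χ n) i hi).2 hci)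


theorem pos_of (Q : Cf) {g : ℝ → ℝ} (hg : Continuous g) (hg0 : ∀ x, 0 ≤ g x) {K s : ℝ} {u p : ℝ → ℝ}
    (hK0 : 0 ≤ K) (hK : ∀ x, 0 ≤ x → x ≤ Q.M → g x ≤ K * x) (hS : Sol Q.a Q.W g s u p)
    (hu : ∀ x ∈ Icc Q.a Q.b, 0 ≤ u x ∧ u x ≤ Q.M) {i : ℕ} (hi : i < Q.m)
    (hr : Q.r ≤ mx u (Q.σ (i+1)) (Q.τ (i+1))) : ∀ t ∈ Ioo Q.a Q.b, 0 < u t := by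
  intro t ht
  by_contra! hc
  have h0 : u t = 0 := le_antisymm hc (hu t (Ioo_subset_Icc_self ht)).1
  have hm : IsLocalMin u t := by
    filter_upwards [Icc_mem_nhds ht.1 ht.2] with x hx
    rw [h0]; exact (hu x hx).1
  have h1 := hm.hasDerivAt_eq_zero (hS.du t)
  have hz := hS.zero_all Q.hW hg hK0 (fun x => by
    by_cases hx : x ∈ Icc Q.a Q.b
    · obtain ⟨a1, a2⟩ := hu x hx
      rw [abs_mul, mul_comm, abs_of_nonneg (hg0 _), abs_of_nonneg a1]
      exact mul_le_mul_of_nonneg_right (hK _ a1 a2) (abs_nonneg _)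
    · simp [Q.hWout x hx]) h0 h1
  obtain ⟨z, hz1, e1⟩ := mx_mem hS.cu (Q.lt0 (by omega : 1 ≤ i + 1) hi).le
  rw [(hz z).1] at e1
  have := Q.hr
  linarith

theorem posint {A : ℝ → ℝ} (hA : Integrable A) (hA0 : ∀ t, 0 ≤ A t) {x y : ℝ} (hxy : x ≤ y)
    (hne : ¬ ∀ᵐ t ∂volume.restrict (Icc x y), A t = 0) : 0 < ∫ t in x..y, A t := by
  rw [intervalIntegral.integral_of_le hxy, ← integral_Icc_eq_integral_Ioc]
  refine lt_of_le_of_ne (integral_nonneg hA0) fun h => hne ?_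
  exact (integral_eq_zero_iff_of_nonneg hA0 hA.integrableOn).1 h.symm

theorem evF {F : ℝ → ℝ} (hF : Continuous F) (h0 : 0 < F 0) :
    ∀ᶠ κ in 𝓝[>] (0:ℝ), ∀ᶠ δ in 𝓝[>] (0:ℝ), κ ≤ F δ := by
  filter_upwards [nhdsWithin_le_nhds (Iio_mem_nhds h0)] with κ hκ
  have : ∀ᶠ δ in 𝓝 (0:ℝ), κ < F δ := hF.continuousAt.eventually (lt_mem_nhds hκ)
  exact nhdsWithin_le_nhds (this.mono fun _ h => h.le)

theorem contF {A : ℝ → ℝ} (hA : Integrable A) {l r : ℝ → ℝ} (hl : Continuous l) (hr : Continuous r) :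
    Continuous fun δ => ∫ t in (l δ)..(r δ), A t := by
  have hp : Continuous fun x => ∫ t in (0:ℝ)..x, A t :=
    intervalIntegral.continuous_primitive (fun _ _ => hA.intervalIntegrable) 0
  have : (fun δ => ∫ t in (l δ)..(r δ), A t) =
      fun δ => (∫ t in (0:ℝ)..(r δ), A t) - ∫ t in (0:ℝ)..(l δ), A t := by
    funext δ
    rw [intervalIntegral.integral_interval_sub_left hA.intervalIntegrable hA.intervalIntegrable]
  rw [this]
  exact (hp.comp hr).sub (hp.comp hl)

theorem ev_lt {k y : ℝ} (hy : 0 < y) : ∀ᶠ δ in 𝓝[>] (0:ℝ), k * δ < y := by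
  have hc : Continuous fun δ : ℝ => k * δ := by fun_prop
  have : ∀ᶠ δ in 𝓝 (0:ℝ), k * δ < y := hc.continuousAt.eventually (gt_mem_nhds (by simpa))
  exact nhdsWithin_le_nhds this

theorem exists_δκ {A B : ℝ → ℝ} (hA : Integrable A) (hB : Integrable B) (m : ℕ) (σ τ : ℕ → ℝ)
    (h1 : ∀ i, 1 ≤ i → i ≤ m → σ i < τ i ∧ 0 < ∫ t in (σ i)..(τ i), A t)
    (h2 : ∀ i ≤ m, τ i < σ (i+1) → 0 < ∫ t in (τ i)..(σ (i+1)), B t) :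
    ∃ δ > 0, ∃ κ > 0, (∀ i, 1 ≤ i → i ≤ m → 2 * δ < τ i - σ i ∧ κ ≤ ∫ t in (σ i + δ)..(τ i - δ), A t) ∧
      (∀ i ≤ m, τ i < σ (i+1) → δ < σ (i+1) - τ i ∧ κ ≤ ∫ t in (τ i)..(σ (i+1) - δ), B t) := by
  have e1 : ∀ i ∈ Finset.range (m+1), ∀ᶠ κ in 𝓝[>] (0:ℝ), ∀ᶠ δ in 𝓝[>] (0:ℝ),
      (1 ≤ i → 2 * δ < τ i - σ i ∧ κ ≤ ∫ t in (σ i + δ)..(τ i - δ), A t) ∧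
      (τ i < σ (i+1) → δ < σ (i+1) - τ i ∧ κ ≤ ∫ t in (τ i)..(σ (i+1) - δ), B t) := by
    intro i hi
    have him : i ≤ m := by simpa [Nat.lt_succ_iff] using hi
    have hx : ∀ᶠ κ in 𝓝[>] (0:ℝ), ∀ᶠ δ in 𝓝[>] (0:ℝ),
      (1 ≤ i → 2 * δ < τ i - σ i ∧ κ ≤ ∫ t in (σ i + δ)..(τ i - δ), A t) := by
      by_cases h : 1 ≤ i
      · obtain ⟨a1, a2⟩ := h1 i h him
        filter_upwards [evF (contF hA (l := fun δ => σ i + δ) (r := fun δ => τ i - δ) (by fun_prop)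
          (by fun_prop)) (by simpa using a2)] with κ hκ
        filter_upwards [hκ, ev_lt (k := 2) (sub_pos.2 a1)] with δ b1 b2 _
        exact ⟨b2, b1⟩
      · exact Eventually.of_forall fun κ => Eventually.of_forall fun δ hh => absurd hh h
    have hy : ∀ᶠ κ in 𝓝[>] (0:ℝ), ∀ᶠ δ in 𝓝[>] (0:ℝ),
      (τ i < σ (i+1) → δ < σ (i+1) - τ i ∧ κ ≤ ∫ t in (τ i)..(σ (i+1) - δ), B t) := by
      by_cases h : τ i < σ (i+1)
      · have a2 := h2 i him h
        filter_upwards [evF (contF hB (l := fun δ => τ i) (r := fun δ => σ (i+1) - δ) (by fun_prop)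
          (by fun_prop)) (by simpa using a2)] with κ hκ
        filter_upwards [hκ, ev_lt (k := 1) (sub_pos.2 h)] with δ b1 b2 _
        exact ⟨by linarith, b1⟩
      · exact Eventually.of_forall fun κ => Eventually.of_forall fun δ hh => absurd hh h
    filter_upwards [hx, hy] with κ c1 c2
    filter_upwards [c1, c2] with δ d1 d2
    exact ⟨d1, d2⟩
  have e2 := (Filter.eventually_all_finset _).2 e1
  obtain ⟨κ, hκ, hκ0⟩ := (e2.and self_mem_nhdsWithin).exists
  have e3 := (Filter.eventually_all_finset _).2 hκ
  obtain ⟨δ, hδ, hδ0⟩ := (e3.and self_mem_nhdsWithin).exists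
  refine ⟨δ, hδ0, κ, hκ0, fun i a1 a2 => (hδ i (by simpa [Nat.lt_succ_iff] using a2)).1 a1,
    fun i a1 => (hδ i (by simpa [Nat.lt_succ_iff] using a1)).2⟩

theorem posW_nonneg (h : ℝ → ℝ) (t : ℝ) : 0 ≤ posW h t := by
  unfold posW; have := neg_abs_le (h t); linarith

theorem negW_nonneg (h : ℝ → ℝ) (t : ℝ) : 0 ≤ negW h t := by
  unfold negW; have := le_abs_self (h t); linarith

theorem consts {g : ℝ → ℝ} (hg_cont : Continuous g)
    (hg_pos : ∀ s > 0, 0 < g s)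
    (hg_ext : ∀ s ≤ (0 : ℝ), g s = 0)
    (hg_zero : Tendsto (fun s => g s / s) (nhdsWithin 0 (Set.Ioi 0)) (nhds 0))
    (hg_infty : Tendsto (fun s => g s / s) atTop atTop)
    {L δ κ I : ℝ} (hL : 0 < L) (hδ : 0 < δ) (hκ : 0 < κ) (hI : 0 ≤ I) :
    ∃ M C K Y r θ ρ c ε Kg : ℝ, ∃ n0 : ℕ,
      (0 < M ∧ 0 ≤ C ∧ 0 ≤ K ∧ Y * L ≤ M * δ ∧ 2 * L < K * κ * δ ^ 2) ∧
      (0 < r ∧ r ≤ M ∧ 0 ≤ θ ∧ 0 < c ∧ 0 < ε) ∧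
      ((ε + θ * I) * L ≤ r / 4 ∧ ρ ≤ ε * δ ∧ ρ ≤ r / 4) ∧
      (0 ≤ Kg ∧ ∀ x, 0 ≤ x → x ≤ M → g x ≤ Kg * x) ∧
      ∀ N : ℝ, n0 ≤ N → (∀ x ≤ M, ic g N x ≤ C) ∧ (∀ x ≥ Y, K * x ≤ ic g N x) ∧
        (∀ x ≤ r, ic g N x ≤ θ) ∧ (∀ x ≥ ρ, c ≤ ic g N x) := by
  have hg : ∀ x, 0 ≤ g x := fun x => by
    rcases le_or_gt x 0 with h | h
    · exact (hg_ext x h).ge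
    · exact (hg_pos x h).le
  set K := 2 * L / (κ * δ ^ 2) + 1 with hK
  have hK0 : 0 < K := by positivity
  have hK1 : 2 * L < K * κ * δ ^ 2 := by
    have : K * κ * δ ^ 2 = 2 * L + κ * δ ^ 2 := by rw [hK]; field_simp
    have : 0 < κ * δ ^ 2 := by positivity
    linarith
  obtain ⟨Y1, hY1, hY2⟩ : ∃ Y1 > 0, ∀ y ≥ Y1, 2 * K * y ≤ g y := by
    obtain ⟨Y0, h⟩ := eventually_atTop.1 (hg_infty.eventually_ge_atTop (2 * K))
    refine ⟨max Y0 1, by positivity, fun y hy => ?_⟩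
    have := h y ((le_max_left _ _).trans hy)
    have hy0 : 0 < y := lt_of_lt_of_le one_pos ((le_max_right _ _).trans hy)
    rwa [le_div_iff₀ hy0] at this
  set M := max 1 (2 * Y1 * L / δ) with hM
  have hM0 : 0 < M := lt_of_lt_of_le one_pos (le_max_left _ _)
  have hM1 : 2 * Y1 * L ≤ M * δ := by
    rw [← div_le_iff₀ hδ]; exact le_max_right _ _
  obtain ⟨C, hC⟩ := (isCompact_Icc (a := 0) (b := M)).bddAbove_image hg_cont.continuousOn
  have hC1 : ∀ x, 0 ≤ x → x ≤ M → g x ≤ C := fun x h1 h2 => hC ⟨x, ⟨h1, h2⟩, rfl⟩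
  have hC0 : 0 ≤ C := (hg 0).trans (hC1 0 le_rfl hM0.le)
  have hC2 : ∀ x ≤ M, g x ≤ C := fun x hx => by
    rcases le_or_gt x 0 with h | h
    · rw [hg_ext x h]; exact hC0
    · exact hC1 x h.le hx
  set η := 1 / (8 * (I + 1) * L) with hη
  have hη0 : 0 < η := by positivity
  have hη1 : η * I * L ≤ 1 / 8 := by
    have : η * (I + 1) * L = 1 / 8 := by rw [hη]; field_simp
    have : 0 < η * L := by positivity
    nlinarith
  obtain ⟨r0, hr0, hr1⟩ : ∃ r0 > 0, ∀ x, 0 < x → x < r0 → g x ≤ η * x := by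
    have := hg_zero.eventually (gt_mem_nhds hη0)
    obtain ⟨r0, hr0, hh⟩ := (mem_nhdsGT_iff_exists_Ioo_subset).1 this
    refine ⟨r0, hr0, fun x h1 h2 => ?_⟩
    have h3 : g x / x < η := hh ⟨h1, h2⟩
    rw [div_lt_iff₀ h1] at h3
    exact h3.le
  set r := min (r0 / 2) M with hr
  have hr' : 0 < r := lt_min (by linarith [hr0]) hM0
  have hrM : r ≤ M := min_le_right _ _
  have hrr : ∀ x, 0 ≤ x → x ≤ r → g x ≤ η * x := fun x h1 h2 => by
    rcases h1.eq_or_lt with rfl | h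
    · rw [hg_ext 0 le_rfl]; simp
    · have : r ≤ r0 / 2 := min_le_left _ _
      exact hr1 x h (by linarith [hr0])
  set ε := r / (8 * L) with hε
  have hε0 : 0 < ε := by positivity
  set ρ := min (ε * δ) (r / 4) with hρ
  have hρ0 : 0 < ρ := lt_min (by positivity) (by positivity)
  obtain ⟨c, hc0, hc⟩ : ∃ c > 0, ∀ y ≥ ρ / 2, c ≤ g y := by
    obtain ⟨z, hz, hz1⟩ := (isCompact_Icc (a := ρ / 2) (b := max (ρ/2) Y1)).exists_isMinOn
      (nonempty_Icc.2 (le_max_left _ _)) hg_cont.continuousOn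
    refine ⟨min (g z) (2 * K * Y1), lt_min (hg_pos z (by linarith [hz.1])) (by positivity), fun y hy => ?_⟩
    by_cases h : y ≤ max (ρ/2) Y1
    · exact (min_le_left _ _).trans (hz1 ⟨hy, h⟩)
    · push Not at h
      have h1 : Y1 ≤ y := (le_max_right _ _).trans h.le
      have := mul_le_mul_of_nonneg_left h1 (by positivity : 0 ≤ 2 * K)
      exact (min_le_right _ _).trans (this.trans (hY2 y h1))
  obtain ⟨n0, hn0⟩ := exists_nat_ge (max (c / (ρ / 2)) (2 * K))
  refine ⟨M, C, K, 2 * Y1, r, η * r, ρ, c, ε, η + C / r, n0, ⟨hM0, hC0, hK0.le, hM1, hK1⟩,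
    ⟨hr', hrM, by positivity, hc0, hε0⟩, ⟨?_, min_le_left _ _, min_le_right _ _⟩,
    ⟨by positivity, ?_⟩, ?_⟩
  · have h1 : ε * L = r / 8 := by rw [hε]; field_simp
    have h2 := mul_le_mul_of_nonneg_left hη1 hr'.le
    nlinarith
  · intro x h1 h2
    have h3 : 0 ≤ C / r * x := by positivity
    rcases le_total x r with h | h
    · have := hrr x h1 h
      linarith
    · have h4 := hC2 x h2
      have h5 : C ≤ C / r * x := by
        rw [div_mul_eq_mul_div, le_div_iff₀ hr']
        exact mul_le_mul_of_nonneg_left h hC0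
      have : 0 ≤ η * x := by positivity
      linarith
  · intro N hN
    have hN1 := hn0.trans hN
    have hN2 := (le_max_left _ _).trans hN1
    have hN3 := (le_max_right _ _).trans hN1
    have hN0 : 0 ≤ N := le_trans (by positivity) hN
    rw [div_le_iff₀ (by positivity)] at hN2
    refine ⟨fun x hx => (ic_self hg hN0 x).trans (hC2 x hx),
      fun x hx => ic_sup hg hN0 hK0.le (by positivity) (fun y hy => hY2 y (by linarith)) hN3 hx,
      fun x hx => (ic_self hg hN0 x).trans ?_, fun x hx => ic_low hg hN0 hc hN2 hx⟩
    rcases le_or_gt x 0 with h | h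
    · rw [hg_ext x h]; positivity
    · exact (hrr x h.le hx).trans (mul_le_mul_of_nonneg_left hx hη0.le)

/-- **Feltrin–Zanolin multiplicity theorem.** Under `(g₊)`, `(g₀)`,
`(g_∞)` and `(h*)` with `m` positivity intervals, there exists `μ* > 0` such that
for `μ > μ*` the Dirichlet problem `u'' + (h⁺ - μ h⁻) g(u) = 0`, `u(a) = 0 = u(b)`,
has at least `2^m - 1` positive solutions. -/
theorem feltrin_zanolin_multiplicity
    (a b : ℝ) (hab : a < b)
    (g : ℝ → ℝ)
    (hg_cont : Continuous g)
    (hg0 : g 0 = 0)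
    (hg_pos : ∀ s > 0, 0 < g s)
    (hg_ext : ∀ s ≤ (0 : ℝ), g s = 0)
    (hg_zero : Tendsto (fun s => g s / s) (nhdsWithin 0 (Set.Ioi 0)) (nhds 0))
    (hg_infty : Tendsto (fun s => g s / s) atTop atTop)
    (h : ℝ → ℝ)
    (hh_int : IntegrableOn h (Set.Icc a b))
    (m : ℕ) (hm : 1 ≤ m)
    (σ τ : ℕ → ℝ)
    (hτ0 : τ 0 = a) (hσlast : σ (m + 1) = b)
    (h0 : τ 0 ≤ σ 1) (hlast : τ m ≤ σ (m + 1))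
    (hστ : ∀ i, 1 ≤ i → i ≤ m → σ i < τ i)
    (hτσ : ∀ i, 1 ≤ i → i < m → τ i < σ (i + 1))
    (hpos : ∀ i, 1 ≤ i → i ≤ m →
      (∀ᵐ t ∂(volume.restrict (Set.Icc (σ i) (τ i))), 0 ≤ h t) ∧
      ¬ (∀ᵐ t ∂(volume.restrict (Set.Icc (σ i) (τ i))), h t = 0))
    (hneg : ∀ i, i ≤ m →
      (∀ᵐ t ∂(volume.restrict (Set.Icc (τ i) (σ (i + 1)))), h t ≤ 0) ∧
      (τ i < σ (i + 1) →
        ¬ (∀ᵐ t ∂(volume.restrict (Set.Icc (τ i) (σ (i + 1)))), h t = 0))) :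
    ∃ μstar > (0 : ℝ), ∀ μ > μstar,
      ∃ v v' : Fin (2 ^ m - 1) → ℝ → ℝ,
        (∀ i, IsCaraSol a b (fun s x => (posW h s - μ * negW h s) * g x) (v i) (v' i) ∧
          v i a = 0 ∧ v i b = 0 ∧ ∀ t ∈ Set.Ioo a b, 0 < v i t) ∧
        (∀ i j, i ≠ j → ∃ t ∈ Set.Icc a b, v i t ≠ v j t) := by
  have hg : ∀ x, 0 ≤ g x := fun x => by
    rcases le_or_gt x 0 with h | h
    · exact (hg_ext x h).ge
    · exact (hg_pos x h).le
  set A : ℝ → ℝ := (Icc a b).indicator (posW h) with hAd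
  set B : ℝ → ℝ := (Icc a b).indicator (negW h) with hBd
  have hA : Integrable A := by
    rw [hAd, integrable_indicator_iff measurableSet_Icc]
    exact (hh_int.abs.div_const 2).add (hh_int.div_const 2)
  have hB : Integrable B := by
    rw [hBd, integrable_indicator_iff measurableSet_Icc]
    exact (hh_int.abs.div_const 2).sub (hh_int.div_const 2)
  have hA0 : ∀ t, 0 ≤ A t := fun t => indicator_nonneg (fun t _ => posW_nonneg h t) t
  have hB0 : ∀ t, 0 ≤ B t := fun t => indicator_nonneg (fun t _ => negW_nonneg h t) t
  have hAout : ∀ x, x ∉ Icc a b → A x = 0 := fun x hx => indicator_of_notMem hx _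
  have hBout : ∀ x, x ∉ Icc a b → B x = 0 := fun x hx => indicator_of_notMem hx _
  have hAin : ∀ x, x ∈ Icc a b → A x = posW h x := fun x hx => indicator_of_mem hx _
  have hBin : ∀ x, x ∈ Icc a b → B x = negW h x := fun x hx => indicator_of_mem hx _
  have le1 : ∀ i ≤ m, τ i ≤ σ (i+1) := by
    intro i hi
    rcases hi.eq_or_lt with rfl | h1
    · exact hlast
    · rcases Nat.eq_zero_or_pos i with rfl | h2
      · exact h0
      · exact (hτσ i h2 h1).le
  have τmono : ∀ i j, i ≤ j → j ≤ m → τ i ≤ τ j := by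
    intro i j hij
    induction j, hij using Nat.le_induction with
    | base => intro _; exact le_rfl
    | succ n hn ih =>
      intro hj
      exact (ih (by omega)).trans ((le1 n (by omega)).trans (hστ (n+1) (by omega) hj).le)
  have aτ : ∀ i ≤ m, a ≤ τ i := fun i hi => hτ0 ▸ τmono 0 i (Nat.zero_le _) hi
  have τb : ∀ i ≤ m, τ i ≤ b := fun i hi => (τmono i m hi le_rfl).trans (hlast.trans hσlast.le)
  have aσ : ∀ i ≤ m, a ≤ σ (i+1) := fun i hi => (aτ i hi).trans (le1 i hi)
  have σb : ∀ i ≤ m, σ (i+1) ≤ b := fun i hi => by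
    rcases hi.eq_or_lt with rfl | h1
    · exact hσlast.le
    · exact (hστ (i+1) (by omega) h1).le.trans (τb _ h1)
  have subp : ∀ i, 1 ≤ i → i ≤ m → Icc (σ i) (τ i) ⊆ Icc a b := by
    intro i h1 h2
    obtain ⟨j, rfl⟩ : ∃ j, i = j + 1 := ⟨i - 1, by omega⟩
    exact Icc_subset_Icc (aσ j (by omega)) (τb _ h2)
  have subn : ∀ i ≤ m, Icc (τ i) (σ (i+1)) ⊆ Icc a b := fun i hi =>
    Icc_subset_Icc (aτ i hi) (σb i hi)
  have posB : ∀ i, 1 ≤ i → i ≤ m → ∀ᵐ t, t ∈ Icc (σ i) (τ i) → B t = 0 := by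
    intro i h1 h2
    filter_upwards [(ae_restrict_iff' measurableSet_Icc).1 (hpos i h1 h2).1] with t ht hti
    rw [hBin t (subp i h1 h2 hti), negW, abs_of_nonneg (ht hti)]; ring
  have negA : ∀ i ≤ m, ∀ᵐ t, t ∈ Icc (τ i) (σ (i+1)) → A t = 0 := by
    intro i h2
    filter_upwards [(ae_restrict_iff' measurableSet_Icc).1 (hneg i h2).1] with t ht hti
    rw [hAin t (subn i h2 hti), posW, abs_of_nonpos (ht hti)]; ring
  have pA : ∀ i, 1 ≤ i → i ≤ m → σ i < τ i ∧ 0 < ∫ t in (σ i)..(τ i), A t := by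
    intro i h1 h2
    refine ⟨hστ i h1 h2, posint hA hA0 (hστ i h1 h2).le fun hh => (hpos i h1 h2).2 ?_⟩
    filter_upwards [hh, (hpos i h1 h2).1, ae_restrict_mem measurableSet_Icc] with t t1 t2 t3
    rw [hAin t (subp i h1 h2 t3), posW, abs_of_nonneg t2] at t1
    linarith
  have pB : ∀ i ≤ m, τ i < σ (i+1) → 0 < ∫ t in (τ i)..(σ (i+1)), B t := by
    intro i h2 h1
    refine posint hB hB0 h1.le fun hh => (hneg i h2).2 h1 ?_
    filter_upwards [hh, (hneg i h2).1, ae_restrict_mem measurableSet_Icc] with t t1 t2 t3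
    rw [hBin t (subn i h2 t3), negW, abs_of_nonpos t2] at t1
    linarith
  obtain ⟨δ, hδ, κ, hκ, hδ1, hδ2⟩ := exists_δκ hA hB m σ τ pA pB
  have hI : 0 ≤ ∫ t, A t := integral_nonneg hA0
  obtain ⟨M, C, K, Y, r, θ, ρ, c, ε, Kg, n0, ⟨hM, hC, hK, hYM, hbig⟩, ⟨hr, hrM, hθ, hc, hε⟩,
    ⟨hsm, hρ1, hρ2⟩, ⟨hKg0, hKg⟩, hic⟩ :=
    consts hg_cont hg_pos hg_ext hg_zero hg_infty (sub_pos.2 hab) hδ hκ hI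
  set X := M / δ + C * ∫ t, A t with hX
  have hX0 : 0 < X := by positivity
  refine ⟨X / (c * κ) + M / (c * κ * δ), by positivity, fun μ hμ => ?_⟩
  have q1 : 0 < X / (c * κ) := by positivity
  have q2 : 0 < M / (c * κ * δ) := by positivity
  have hμ0 : 0 ≤ μ := by linarith [hμ]
  have hμ1 : X ≤ μ * c * κ := by
    rw [mul_assoc, ← div_le_iff₀ (by positivity)]; linarith [hμ]
  have hμ2 : M ≤ μ * c * κ * δ := by
    rw [mul_assoc, mul_assoc, ← div_le_iff₀ (by positivity), ← mul_assoc]; linarith [hμ]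
  let Q : Cf := 
    { a := a, b := b, m := m, σ := σ, τ := τ, A := A, B := B, δ := δ, κ := κ, M := M, C := C, K := K
      Y := Y, r := r, θ := θ, ρ := ρ, c := c, ε := ε, S := X, μ := μ
      hab := hab, hm := hm, hA := hA, hB := hB, hA0 := hA0, hB0 := hB0, hAout := hAout
      hBout := hBout, posB := posB, negA := negA, hτ0 := hτ0, hσl := hσlast, le1 := le1
      lt1 := hτσ, hδ := hδ, hκ := hκ, hδ1 := hδ1, hδ2 := hδ2, hM := hM, hC := hC, hK := hK
      hYM := hYM, hbig := hbig, hr := hr, hrM := hrM, hθ := hθ, hc := hc, hε := hε, hsm := hsm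
      hρ1 := hρ1, hρ2 := hρ2, hμ := hμ0, hμ1 := hμ1, hμ2 := hμ2, hS := le_rfl }
  have hNn : ∀ n : ℕ, (0:ℝ) ≤ ((n + n0 : ℕ) : ℝ) := fun n => Nat.cast_nonneg _
  have hNl : ∀ n : ℕ, Nl Q (ic g ((n + n0 : ℕ) : ℝ)) ((n + n0 : ℕ) : ℝ) := by
    intro n
    obtain ⟨i1, i2, i3, i4⟩ := hic ((n + n0 : ℕ) : ℝ) (by exact_mod_cast (by omega : n0 ≤ n + n0))
    refine ⟨(ic_lip hg (hNn n)).continuous, ic_nonneg hg (hNn n), fun x hx => ?_, hNn n,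
      fun x => ?_, i1, i2, i3, i4⟩
    · exact le_antisymm ((ic_self hg (hNn n) x).trans (hg_ext x hx).le) (ic_nonneg hg (hNn n) x)
    · rw [abs_of_nonneg (ic_nonneg hg (hNn n) x)]
      have := ic_le hg (hNn n) x 0
      rwa [hg0, zero_add, sub_zero] at this
  have hsol := fun j : Fin (2 ^ m - 1) => lim_sol Q (fun n => ic g ((n + n0 : ℕ) : ℝ)) _ hNl _
    (fun n => ic_lip hg (hNn n)) g hg_cont (fun x => ic_tendsto hg hg_cont n0 x)
    (fun i => Nat.testBit (j + 1) i = true)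
  choose s u p hS hub hu hcj using hsol
  have hlt : ∀ j : Fin (2 ^ m - 1), (j : ℕ) + 1 < 2 ^ m := fun j => by omega
  have hbit : ∀ j : Fin (2 ^ m - 1), ∀ i, m ≤ i → Nat.testBit (j + 1) i = false := fun j i hi =>
    Nat.testBit_lt_two_pow ((hlt j).trans_le (Nat.pow_le_pow_right (by norm_num) hi))
  have hWeq : ∀ x ∈ Icc a b, Q.W x = posW h x - μ * negW h x := fun x hx => by
    rw [← hAin x hx, ← hBin x hx]; rfl
  refine ⟨u, p, fun j => ⟨⟨fun t _ => (hS j).du t, ?_, ?_⟩, (hS j).u0, hub j, ?_⟩, ?_⟩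
  · refine (ii_mul Q.hW (hg_cont.comp (hS j).cu) a b).congr ?_
    intro x hx
    rw [uIoc_of_le hab.le] at hx
    simp only [Function.comp, hWeq x (Ioc_subset_Icc_self hx)]
  · intro t ht
    rw [(hS j).pe t, (hS j).pa]
    congr 1
    apply intervalIntegral.integral_congr
    intro x hx
    rw [uIcc_of_le ht.1] at hx
    simp only [hWeq x ⟨hx.1, hx.2.trans ht.2⟩]
  · obtain ⟨i, hi⟩ := Nat.exists_testBit_of_ne_zero (Nat.succ_ne_zero (j : ℕ))
    have him : i < m := by
      by_contra! hc
      have := hbit j i hc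
      simp_all
    exact pos_of Q hg_cont hg hKg0 hKg (hS j) (hu j) him ((hcj j i him).1 hi)
  · have key : ∀ j k : Fin (2 ^ m - 1), ∀ i, Nat.testBit (j + 1) i = true →
        Nat.testBit (k + 1) i = false → ∃ t ∈ Icc a b, u j t ≠ u k t := by
      intro j k i h1 h2
      have him : i < m := by
        by_contra! hc
        have := hbit j i hc
        simp_all
      have e1 := (hcj j i him).1 h1
      have e2 := (hcj k i him).2 (by simp [h2])
      obtain ⟨z, hz, e3⟩ := mx_mem (hS j).cu (hστ (i+1) (by omega) him).le
      have e4 := mx_le (hS k).cu z hz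
      refine ⟨z, subp (i+1) (by omega) him hz, fun e => ?_⟩
      have e1' : r ≤ mx (u j) (σ (i+1)) (τ (i+1)) := e1
      have e2' : mx (u k) (σ (i+1)) (τ (i+1)) ≤ r / 2 := e2
      linarith
    intro j k hjk
    have hne : (j : ℕ) + 1 ≠ k + 1 := fun e => hjk (Fin.ext (by omega))
    obtain ⟨i, hi⟩ : ∃ i, Nat.testBit (j + 1) i ≠ Nat.testBit (k + 1) i := by
      by_contra! hc
      exact hne (Nat.eq_of_testBit_eq hc)
    rcases hb1 : Nat.testBit (j + 1) i with _ | _ <;> rcases hb2 : Nat.testBit (k + 1) i with _ | _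
    · exact absurd (hb1.trans hb2.symm) hi
    · obtain ⟨t, ht, e⟩ := key k j i hb2 hb1
      exact ⟨t, ht, e.symm⟩
    · exact key j k i hb1 hb2
    · exact absurd (hb1.trans hb2.symm) hi
end

section
/- (Uniform smallness on negativity intervals.) Let g : [0,∞) → [0,∞) be continuous and satisfy (g₊), let h ∈ L¹([a,b]) satisfy condition (h*) with m positivity intervals, and assume h ≢ 0 on every left neighborhood of σ_i and on every right neighborhood of τ_i. Let R > 0. Then for every ε > 0 there exists μ_ε > 0 such that for every μ > μ_ε and every positive solution u of (D_μ) with ‖u‖_∞ ≤ R, one has u(t) < ε for every t ∈ I_i⁻ and every i ∈ {1,…,m}. -/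
open Set MeasureTheory Filter Topology

theorem mvt_aux {u u' : ℝ → ℝ} {x y : ℝ} (hxy : x < y)
    (hd : ∀ t ∈ Icc x y, HasDerivAt u (u' t) t) :
    ∃ c ∈ Ioo x y, u y - u x = u' c * (y - x) := by
  obtain ⟨c, hc, e⟩ := exists_hasDerivAt_eq_slope u u' hxy
    (fun t ht => (hd t ht).continuousAt.continuousWithinAt)
    (fun t ht => hd t (Ioo_subset_Icc_self ht))
  refine ⟨c, hc, ?_⟩
  have : y - x ≠ 0 := by linarith
  rw [e]; field_simp

theorem core_aux (p q r C R ε η : ℝ) (A : ℝ → ℝ) (hpq : p < q) (hqr : q < r) (hC : 0 ≤ C)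
    (hR : 0 < R) (hε : 0 < ε) (hη : 0 < η) (hA : ∀ δ > 0, q + δ ≤ r → 0 < A δ) :
    ∀ᶠ μ : ℝ in atTop, ∀ u u' : ℝ → ℝ,
      (∀ t ∈ Icc p r, HasDerivAt u (u' t) t) →
      (∀ t ∈ Icc p r, 0 ≤ u t ∧ u t ≤ R) →
      (∀ s ∈ Icc p q, -C ≤ u' q - u' s) →
      (∀ s t, q ≤ s → s ≤ t → t ≤ r → u' s ≤ u' t) →
      (∀ δ > 0, q + δ ≤ r → (∀ t ∈ Icc q (q + δ), ε / 2 ≤ u t) →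
        μ * (η * A δ) ≤ u' (q + δ) - u' q) →
      u q < ε := by
  obtain ⟨K, hK⟩ : ∃ K, K = R / (q - p) + C := ⟨_, rfl⟩
  have hqp : 0 < q - p := by linarith
  have hRq : 0 < R / (q - p) := by positivity
  have hK0 : 0 < K := by linarith
  obtain ⟨δ, hδ⟩ : ∃ δ, δ = min (ε / (2 * K)) (r - q) := ⟨_, rfl⟩
  have hδ0 : 0 < δ := by
    rw [hδ]; exact lt_min (by positivity) (by linarith)
  have hδ1 : δ ≤ ε / (2 * K) := hδ ▸ min_le_left _ _
  have hδ2 : δ ≤ r - q := hδ ▸ min_le_right _ _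
  have hδK : K * δ ≤ ε / 2 := by
    calc K * δ ≤ K * (ε / (2 * K)) := by gcongr
      _ = ε / 2 := by field_simp
  have hA0 : 0 < A (δ / 2) := hA _ (by linarith) (by linarith)
  filter_upwards [eventually_gt_atTop ((2 * R / δ + K) / (η * A (δ / 2)))] with μ hμ u u' hd hb h1 h2 h3
  by_contra hcon
  push Not at hcon
  have hμ' : 2 * R / δ + K < μ * (η * A (δ / 2)) := by
    rwa [div_lt_iff₀ (by positivity)] at hμ
  have hq' : -K ≤ u' q := by
    obtain ⟨c, hc, e⟩ := mvt_aux (u := u) (u' := u') hpq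
      (fun t ht => hd t ⟨ht.1, by linarith [ht.2]⟩)
    have := h1 c (Ioo_subset_Icc_self hc)
    have e1 : u' c = (u q - u p) / (q - p) := by rw [e]; field_simp
    have e2 : -(R / (q - p)) ≤ u' c := by
      rw [e1, ← neg_div]
      have := (hb p ⟨le_rfl, by linarith⟩).2
      gcongr
      linarith
    linarith
  have hlow : ∀ t ∈ Icc q (q + δ), ε / 2 ≤ u t := by
    intro t ht
    rcases eq_or_lt_of_le ht.1 with rfl | hlt
    · linarith
    obtain ⟨c, hc, e⟩ := mvt_aux (u := u) (u' := u') hlt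
      (fun s hs => hd s ⟨by linarith [hs.1], by linarith [hs.2, ht.2]⟩)
    have hc' := h2 q c le_rfl hc.1.le (by linarith [hc.2, ht.2])
    have : -K * (t - q) ≤ u' c * (t - q) :=
      mul_le_mul_of_nonneg_right (by linarith) (by linarith)
    have : K * (t - q) ≤ K * δ := mul_le_mul_of_nonneg_left (by linarith [ht.2]) hK0.le
    linarith
  have h4 := h3 (δ / 2) (by linarith) (by linarith)
    (fun t ht => hlow t ⟨ht.1, by linarith [ht.2]⟩)
  obtain ⟨c, hc, e⟩ := mvt_aux (u := u) (u' := u') (x := q + δ / 2) (y := q + δ) (by linarith)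
      (fun s hs => hd s ⟨by linarith [hs.1], by linarith [hs.2]⟩)
  have h5 := h2 (q + δ / 2) c (by linarith) hc.1.le (by linarith [hc.2])
  have h6 : 2 * R / δ < u' c := by linarith
  have h7 : 2 * R / δ * (δ / 2) < u' c * (δ / 2) := mul_lt_mul_of_pos_right h6 (by linarith)
  have h8 : 2 * R / δ * (δ / 2) = R := by field_simp
  have h9 := (hb (q + δ) ⟨by linarith, by linarith⟩).2
  have h10 := (hb (q + δ / 2) ⟨by linarith, by linarith⟩).1
  have : q + δ - (q + δ / 2) = δ / 2 := by ring
  rw [this] at e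
  linarith

theorem posW_int {h : ℝ → ℝ} {s : Set ℝ} (hh : IntegrableOn h s) : IntegrableOn (posW h) s :=
  (hh.norm.div_const 2).add (hh.div_const 2)

theorem negW_int {h : ℝ → ℝ} {s : Set ℝ} (hh : IntegrableOn h s) : IntegrableOn (negW h) s :=
  (hh.norm.div_const 2).sub (hh.div_const 2)

theorem negW_pos_aux {h : ℝ → ℝ} {s t : ℝ} (hst : s ≤ t) (hh : IntegrableOn h (Icc s t))
    (hneg : ∀ᵐ x ∂(volume.restrict (Icc s t)), h x ≤ 0)
    (hne : ¬ ∀ᵐ x ∂(volume.restrict (Icc s t)), h x = 0) :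
    0 < ∫ x in s..t, negW h x := by
  rw [intervalIntegral.integral_of_le hst, ← integral_Icc_eq_integral_Ioc]
  refine lt_of_le_of_ne (integral_nonneg (negW_nonneg h)) (fun e => hne ?_)
  have := (integral_eq_zero_iff_of_nonneg (negW_nonneg h) (negW_int hh)).1 e.symm
  filter_upwards [this, hneg] with x h1 h2
  simp only [negW, Pi.zero_apply, abs_of_nonpos h2] at h1
  linarith

/-- Increments of the derivative. -/
theorem incr_aux {a b μ : ℝ} {g h u u' : ℝ → ℝ} (hab : a ≤ b)
    (hs : IsCaraSol a b (fun s x => (posW h s - μ * negW h s) * g x) u u')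
    {s t : ℝ} (has : a ≤ s) (hst : s ≤ t) (htb : t ≤ b) :
    IntervalIntegrable (fun x => (posW h x - μ * negW h x) * g (u x)) volume s t ∧
    u' t - u' s = - ∫ x in s..t, (posW h x - μ * negW h x) * g (u x) := by
  obtain ⟨-, hi, he⟩ := hs
  have hi' : ∀ x y, a ≤ x → x ≤ y → y ≤ b →
      IntervalIntegrable (fun x => (posW h x - μ * negW h x) * g (u x)) volume x y := by
    intro x y h1 h2 h3
    refine hi.mono_set ?_
    rw [uIcc_of_le h2, uIcc_of_le hab]
    exact Icc_subset_Icc h1 h3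
  refine ⟨hi' s t has hst htb, ?_⟩
  rw [he t ⟨has.trans hst, htb⟩, he s ⟨has, hst.trans htb⟩,
    ← intervalIntegral.integral_add_adjacent_intervals (hi' a s le_rfl has (hst.trans htb))
      (hi' s t has hst htb)]
  ring

theorem facts_aux {a b μ R G ε η : ℝ} {g h u u' : ℝ → ℝ} (hab : a ≤ b) (hμ : 0 < μ)
    (hh : IntegrableOn h (Icc a b))
    (hs : IsCaraSol a b (fun s x => (posW h s - μ * negW h s) * g x) u u')
    (hu : ∀ t ∈ Icc a b, 0 ≤ u t ∧ u t ≤ R)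
    (hG : ∀ x, 0 ≤ x → x ≤ R → 0 ≤ g x ∧ g x ≤ G)
    (hη : ∀ x, ε / 2 ≤ x → x ≤ R → η ≤ g x) :
    (∀ s t, a ≤ s → s ≤ t → t ≤ b → -(G * ∫ x in a..b, posW h x) ≤ u' t - u' s) ∧
    (∀ s t, a ≤ s → s ≤ t → t ≤ b → (∀ᵐ x ∂(volume.restrict (Icc s t)), h x ≤ 0) →
      u' s ≤ u' t) ∧
    (∀ s t, a ≤ s → s ≤ t → t ≤ b → (∀ᵐ x ∂(volume.restrict (Icc s t)), h x ≤ 0) →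
      (∀ x ∈ Icc s t, ε / 2 ≤ u x) →
      μ * (η * ∫ x in s..t, negW h x) ≤ u' t - u' s) := by
  have hG0 : 0 ≤ G := by
    have h1 := hu a ⟨le_rfl, hab⟩
    have h2 := hG _ h1.1 h1.2
    linarith
  have hP : ∀ s t, a ≤ s → s ≤ t → t ≤ b → IntervalIntegrable (posW h) volume s t := by
    intro s t h1 h2 h3
    rw [intervalIntegrable_iff_integrableOn_Icc_of_le h2]
    exact (posW_int hh).mono_set (Icc_subset_Icc h1 h3)
  have hN : ∀ s t, a ≤ s → s ≤ t → t ≤ b → IntervalIntegrable (negW h) volume s t := by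
    intro s t h1 h2 h3
    rw [intervalIntegrable_iff_integrableOn_Icc_of_le h2]
    exact (negW_int hh).mono_set (Icc_subset_Icc h1 h3)
  have hg : ∀ x ∈ Icc a b, 0 ≤ g (u x) ∧ g (u x) ≤ G := fun x hx => hG _ (hu x hx).1 (hu x hx).2
  refine ⟨?_, ?_, ?_⟩
  · intro s t h1 h2 h3
    obtain ⟨hi, he⟩ := incr_aux hab hs h1 h2 h3
    rw [he]
    apply neg_le_neg
    calc ∫ x in s..t, (posW h x - μ * negW h x) * g (u x)
        ≤ ∫ x in s..t, G * posW h x := by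
          refine intervalIntegral.integral_mono_on h2 hi ((hP s t h1 h2 h3).const_mul G) ?_
          intro x hx
          have hgx := hg x ⟨h1.trans hx.1, hx.2.trans h3⟩
          have e1 := mul_nonneg (mul_nonneg hμ.le (negW_nonneg h x)) hgx.1
          have e2 := mul_le_mul_of_nonneg_left hgx.2 (posW_nonneg h x)
          nlinarith
      _ = G * ∫ x in s..t, posW h x := by rw [intervalIntegral.integral_const_mul]
      _ ≤ G * ∫ x in a..b, posW h x := by
          refine mul_le_mul_of_nonneg_left ?_ hG0
          exact intervalIntegral.integral_mono_interval h1 h2 h3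
            (Eventually.of_forall (posW_nonneg h)) (hP a b le_rfl hab le_rfl)
  · intro s t h1 h2 h3 hn
    obtain ⟨hi, he⟩ := incr_aux hab hs h1 h2 h3
    have : ∫ x in s..t, (posW h x - μ * negW h x) * g (u x) ≤ ∫ x in s..t, (0:ℝ) := by
      refine intervalIntegral.integral_mono_ae_restrict h2 hi (by simp) ?_
      filter_upwards [hn, ae_restrict_mem measurableSet_Icc] with x hx hx'
      have hgx := hg x ⟨h1.trans hx'.1, hx'.2.trans h3⟩
      have e1 := mul_nonneg (mul_nonneg hμ.le (negW_nonneg h x)) hgx.1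
      have : posW h x = 0 := by simp [posW, abs_of_nonpos hx]; ring
      simp only [this]
      nlinarith
    simp at this
    linarith
  · intro s t h1 h2 h3 hn hl
    obtain ⟨hi, he⟩ := incr_aux hab hs h1 h2 h3
    have : ∫ x in s..t, (posW h x - μ * negW h x) * g (u x)
        ≤ ∫ x in s..t, (-(μ * η)) * negW h x := by
      refine intervalIntegral.integral_mono_ae_restrict h2 hi ((hN s t h1 h2 h3).const_mul _) ?_
      filter_upwards [hn, ae_restrict_mem measurableSet_Icc] with x hx hx'
      have hgx := hη (u x) (hl x hx') (hu x ⟨h1.trans hx'.1, hx'.2.trans h3⟩).2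
      have e1 := mul_le_mul_of_nonneg_left hgx (mul_nonneg hμ.le (negW_nonneg h x))
      have : posW h x = 0 := by simp [posW, abs_of_nonpos hx]; ring
      simp only [this]
      nlinarith
    rw [intervalIntegral.integral_const_mul] at this
    linarith

/-- **Uniform smallness on negativity intervals.** For every
`ε > 0` there exists `μ_ε > 0` such that for every `μ > μ_ε` every positive
solution `u` of `(D_μ)` with `‖u‖_∞ ≤ R` satisfies `u < ε` on every negativity
interval `I_i⁻`, `i ∈ {1,…,m}`. -/
theorem uniform_smallness_on_negativity_intervals
    (a b : ℝ) (hab : a < b)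
    (g : ℝ → ℝ)
    (hg_cont : Continuous g)
    (hg0 : g 0 = 0)
    (hg_pos : ∀ s > 0, 0 < g s)
    (hg_ext : ∀ s ≤ (0 : ℝ), g s = 0)
    (h : ℝ → ℝ)
    (hh_int : IntegrableOn h (Set.Icc a b))
    (m : ℕ) (hm : 1 ≤ m)
    (σ τ : ℕ → ℝ)
    (hτ0 : τ 0 = a) (hσlast : σ (m + 1) = b)
    (h0 : τ 0 ≤ σ 1) (hlast : τ m ≤ σ (m + 1))
    (hστ : ∀ i, 1 ≤ i → i ≤ m → σ i < τ i)
    (hτσ : ∀ i, 1 ≤ i → i < m → τ i < σ (i + 1))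
    (hpos : ∀ i, 1 ≤ i → i ≤ m →
      (∀ᵐ t ∂(volume.restrict (Set.Icc (σ i) (τ i))), 0 ≤ h t) ∧
      ¬ (∀ᵐ t ∂(volume.restrict (Set.Icc (σ i) (τ i))), h t = 0))
    (hneg : ∀ i, i ≤ m →
      (∀ᵐ t ∂(volume.restrict (Set.Icc (τ i) (σ (i + 1)))), h t ≤ 0) ∧
      (τ i < σ (i + 1) →
        ¬ (∀ᵐ t ∂(volume.restrict (Set.Icc (τ i) (σ (i + 1)))), h t = 0)))
    (hσleft : ∀ i, 1 ≤ i → i ≤ m → ∀ δ > (0 : ℝ),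
      ¬ (∀ᵐ t ∂(volume.restrict (Set.Icc (σ i - δ) (σ i) ∩ Set.Icc a b)), h t = 0))
    (hτright : ∀ i, 1 ≤ i → i ≤ m → ∀ δ > (0 : ℝ),
      ¬ (∀ᵐ t ∂(volume.restrict (Set.Icc (τ i) (τ i + δ) ∩ Set.Icc a b)), h t = 0))
    (R : ℝ) (hR : 0 < R) :
    ∀ ε > (0 : ℝ), ∃ με > (0 : ℝ), ∀ μ > με,
      ∀ u u' : ℝ → ℝ,
        IsCaraSol a b (fun s x => (posW h s - μ * negW h s) * g x) u u' →
        u a = 0 → u b = 0 → (∀ t ∈ Set.Ioo a b, 0 < u t) →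
        (∀ t ∈ Set.Icc a b, |u t| ≤ R) →
        ∀ i, 1 ≤ i → i ≤ m → ∀ t ∈ Set.Icc (τ i) (σ (i + 1)), u t < ε := by
  intro ε hε
  -- ordering
  have haσ : ∀ i, 1 ≤ i → i ≤ m → a ≤ σ i := by
    intro i hi
    induction i, hi using Nat.le_induction with
    | base => intro _; linarith
    | succ k hk ih =>
      intro hkm
      have e1 := ih (by omega)
      have e2 := hστ k hk (by omega)
      have e3 := hτσ k hk (by omega)
      linarith
  have hτb' : ∀ k, k < m → τ (m - k) ≤ b := by
    intro k
    induction k with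
    | zero => intro _; simpa [hσlast] using hlast
    | succ k ih =>
      intro hk
      have e1 := ih (by omega)
      have e2 := hστ (m - k) (by omega) (by omega)
      have e3 := hτσ (m - (k + 1)) (by omega) (by omega)
      have : m - (k + 1) + 1 = m - k := by omega
      rw [this] at e3
      linarith
  have hτb : ∀ i, 1 ≤ i → i ≤ m → τ i ≤ b := by
    intro i h1 h2
    have := hτb' (m - i) (by omega)
    rwa [show m - (m - i) = i by omega] at this
  have hσb : ∀ i, 1 ≤ i → i ≤ m → σ (i + 1) ≤ b := by
    intro i h1 h2
    rcases eq_or_lt_of_le h2 with rfl | h3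
    · exact hσlast.le
    · have e1 := hστ (i + 1) (by omega) (by omega)
      have e2 := hτb (i + 1) (by omega) (by omega)
      linarith
  have hτmb : τ m < b := by
    rcases lt_or_eq_of_le (hτb m hm le_rfl) with h1 | h1
    · exact h1
    · exfalso
      refine hτright m hm le_rfl 1 one_pos ?_
      have : volume (Icc (τ m) (τ m + 1) ∩ Icc a b) = 0 := by
        refine measure_mono_null (t := {b}) ?_ (by simp)
        intro x hx
        simp only [mem_singleton_iff]
        exact le_antisymm hx.2.2 (h1 ▸ hx.1.1)
      rw [Measure.restrict_eq_zero.2 this]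
      simp
  have hJ : ∀ i, 1 ≤ i → i ≤ m → τ i < σ (i + 1) := by
    intro i h1 h2
    rcases eq_or_lt_of_le h2 with rfl | h3
    · rw [hσlast]; exact hτmb
    · exact hτσ i h1 h3
  -- bounds on g
  have hg_nn : ∀ x, 0 ≤ x → 0 ≤ g x := by
    intro x hx
    rcases eq_or_lt_of_le hx with rfl | h1
    · exact hg0.ge
    · exact (hg_pos x h1).le
  obtain ⟨G, hG⟩ : ∃ G, ∀ x ∈ Icc 0 R, g x ≤ G := by
    obtain ⟨G, hG⟩ := (isCompact_Icc (a := (0:ℝ)) (b := R)).bddAbove_image hg_cont.continuousOn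
    exact ⟨G, fun x hx => hG (mem_image_of_mem g hx)⟩
  have hG' : ∀ x, 0 ≤ x → x ≤ R → 0 ≤ g x ∧ g x ≤ G :=
    fun x h1 h2 => ⟨hg_nn x h1, hG x ⟨h1, h2⟩⟩
  have hG0 : 0 ≤ G := by have := hG' 0 le_rfl hR.le; linarith
  obtain ⟨η, hη0, hη⟩ : ∃ η > 0, ∀ x, ε / 2 ≤ x → x ≤ R → η ≤ g x := by
    by_cases hne : (Icc (ε / 2) R).Nonempty
    · obtain ⟨x0, hx0, hmin⟩ := isCompact_Icc.exists_isMinOn hne hg_cont.continuousOn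
      exact ⟨g x0, hg_pos _ (by linarith [hx0.1]), fun x h1 h2 => hmin ⟨h1, h2⟩⟩
    · exact ⟨1, one_pos, fun x h1 h2 => absurd ⟨x, h1, h2⟩ hne⟩
  obtain ⟨C, hC⟩ : ∃ C, C = G * ∫ x in a..b, posW h x := ⟨_, rfl⟩
  have hC0 : 0 ≤ C := by
    rw [hC]
    exact mul_nonneg hG0 (intervalIntegral.integral_nonneg hab.le (fun x _ => posW_nonneg h x))
  have hsub : ∀ i, i ≤ m → ∀ s t, τ i ≤ s → t ≤ σ (i + 1) →
      ∀ᵐ x ∂(volume.restrict (Icc s t)), h x ≤ 0 := by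
    intro i hi s t h1 h2
    exact ae_restrict_of_ae_restrict_of_subset (Icc_subset_Icc h1 h2) (hneg i hi).1
  -- values at τ i
  have Hτ : ∀ i, 1 ≤ i → i ≤ m → ∀ᶠ μ : ℝ in atTop, ∀ u u' : ℝ → ℝ,
      IsCaraSol a b (fun s x => (posW h s - μ * negW h s) * g x) u u' →
      (∀ t ∈ Icc a b, 0 ≤ u t ∧ u t ≤ R) → u (τ i) < ε := by
    intro i h1 h2
    have hA : ∀ δ > 0, τ i + δ ≤ σ (i + 1) → 0 < ∫ x in (τ i)..(τ i + δ), negW h x := by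
      intro δ hδ hle
      have e1 := haσ i h1 h2
      have e2 := hστ i h1 h2
      have e3 := hσb i h1 h2
      have hss : Icc (τ i) (τ i + δ) ⊆ Icc a b := Icc_subset_Icc (by linarith) (by linarith)
      refine negW_pos_aux (by linarith) (hh_int.mono_set hss) (hsub i h2 _ _ le_rfl hle) ?_
      have := hτright i h1 h2 δ hδ
      rwa [inter_eq_left.2 hss] at this
    have e1 := haσ i h1 h2
    have e2 := hστ i h1 h2
    have e3 := hσb i h1 h2
    have e4 := hJ i h1 h2
    filter_upwards [core_aux (σ i) (τ i) (σ (i + 1)) C R ε η _ e2 e4 hC0 hR hε hη0 hA,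
      eventually_gt_atTop 0] with μ hμ hμ0 u u' hs hu
    obtain ⟨f1, f2, f3⟩ := facts_aux hab.le hμ0 hh_int hs hu hG' hη
    refine hμ u u' (fun t ht => hs.1 t ⟨e1.trans ht.1, ht.2.trans e3⟩)
      (fun t ht => hu t ⟨e1.trans ht.1, ht.2.trans e3⟩) ?_ ?_ ?_
    · intro s hs
      rw [hC]
      exact f1 s _ (e1.trans hs.1) hs.2 (by linarith)
    · intro s t k1 k2 k3
      exact f2 s t (by linarith) k2 (by linarith) (hsub i h2 _ _ k1 k3)
    · intro δ k1 k2 k3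
      exact f3 _ _ (by linarith) (by linarith) (by linarith) (hsub i h2 _ _ le_rfl k2) k3
  -- values at σ (i + 1)
  have Hσ : ∀ i, 1 ≤ i → i < m → ∀ᶠ μ : ℝ in atTop, ∀ u u' : ℝ → ℝ,
      IsCaraSol a b (fun s x => (posW h s - μ * negW h s) * g x) u u' →
      (∀ t ∈ Icc a b, 0 ≤ u t ∧ u t ≤ R) → u (σ (i + 1)) < ε := by
    intro i h1 h2
    have e1 := haσ i h1 h2.le
    have e2 := hστ i h1 h2.le
    have e3 := hJ i h1 h2.le
    have e4 := hστ (i + 1) (by omega) (by omega)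
    have e5 := hτb (i + 1) (by omega) (by omega)
    have hA : ∀ δ > 0, -σ (i + 1) + δ ≤ -τ i →
        0 < ∫ x in (σ (i + 1) - δ)..(σ (i + 1)), negW h x := by
      intro δ hδ hle
      have hss : Icc (σ (i + 1) - δ) (σ (i + 1)) ⊆ Icc a b :=
        Icc_subset_Icc (by linarith) (by linarith)
      refine negW_pos_aux (by linarith) (hh_int.mono_set hss)
        (hsub i h2.le _ _ (by linarith) le_rfl) ?_
      have := hσleft (i + 1) (by omega) (by omega) δ hδ
      rwa [inter_eq_left.2 hss] at this
    filter_upwards [core_aux (-τ (i + 1)) (-σ (i + 1)) (-τ i) C R ε η _ (by linarith)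
      (by linarith) hC0 hR hε hη0 hA, eventually_gt_atTop 0] with μ hμ hμ0 u u' hs hu
    obtain ⟨f1, f2, f3⟩ := facts_aux hab.le hμ0 hh_int hs hu hG' hη
    have := hμ (fun t => u (-t)) (fun t => -u' (-t)) ?_ ?_ ?_ ?_ ?_
    · simpa using this
    · intro t ht
      have := (hs.1 (-t) ⟨by linarith [ht.2], by linarith [ht.1]⟩).comp t (hasDerivAt_neg t)
      simpa [Function.comp_def] using this
    · intro t ht
      exact hu (-t) ⟨by linarith [ht.2], by linarith [ht.1]⟩
    · intro s hs
      have := f1 (σ (i + 1)) (-s) (by linarith) (by linarith [hs.2]) (by linarith [hs.1])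
      rw [hC, neg_neg]
      linarith
    · intro s t k1 k2 k3
      have := f2 (-t) (-s) (by linarith) (by linarith) (by linarith)
        (hsub i h2.le _ _ (by linarith) (by linarith))
      linarith
    · intro δ k1 k2 k3
      have := f3 (σ (i + 1) - δ) (σ (i + 1)) (by linarith) (by linarith) (by linarith)
        (hsub i h2.le _ _ (by linarith) le_rfl) (fun x hx => by
          have := k3 (-x) ⟨by linarith [hx.2], by linarith [hx.1]⟩
          simpa using this)
      have e : -(-σ (i + 1) + δ) = σ (i + 1) - δ := by ring
      simp only [e, neg_neg]
      linarith
  have Hτ' : ∀ᶠ μ : ℝ in atTop, ∀ i ∈ Finset.Icc 1 m, ∀ u u' : ℝ → ℝ,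
      IsCaraSol a b (fun s x => (posW h s - μ * negW h s) * g x) u u' →
      (∀ t ∈ Icc a b, 0 ≤ u t ∧ u t ≤ R) → u (τ i) < ε := by
    rw [Filter.eventually_all_finset]
    intro i hi
    rw [Finset.mem_Icc] at hi
    exact Hτ i hi.1 hi.2
  have Hσ' : ∀ᶠ μ : ℝ in atTop, ∀ i ∈ Finset.Ico 1 m, ∀ u u' : ℝ → ℝ,
      IsCaraSol a b (fun s x => (posW h s - μ * negW h s) * g x) u u' →
      (∀ t ∈ Icc a b, 0 ≤ u t ∧ u t ≤ R) → u (σ (i + 1)) < ε := by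
    rw [Filter.eventually_all_finset]
    intro i hi
    rw [Finset.mem_Ico] at hi
    exact Hσ i hi.1 hi.2
  obtain ⟨M, hM⟩ := eventually_atTop.1 (Hτ'.and Hσ')
  refine ⟨max M 1, by positivity, ?_⟩
  intro μ hμ u u' hs hua hub hup huR i h1 h2 t ht
  have hμM : M ≤ μ := (le_max_left _ _).trans hμ.le
  have hμ0 : 0 < μ := by
    have : (1:ℝ) ≤ μ := (le_max_right _ _).trans hμ.le
    linarith
  have hu : ∀ t ∈ Icc a b, 0 ≤ u t ∧ u t ≤ R := by
    intro t ht
    refine ⟨?_, (le_abs_self _).trans (huR t ht)⟩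
    rcases eq_or_lt_of_le ht.1 with rfl | k1
    · exact hua.ge
    rcases eq_or_lt_of_le ht.2 with rfl | k2
    · exact hub.ge
    exact (hup t ⟨k1, k2⟩).le
  obtain ⟨f1, f2, f3⟩ := facts_aux hab.le hμ0 hh_int hs hu hG' hη
  have uτ : u (τ i) < ε := (hM μ hμM).1 i (Finset.mem_Icc.2 ⟨h1, h2⟩) u u' hs hu
  have uσ : u (σ (i + 1)) < ε := by
    rcases eq_or_lt_of_le h2 with rfl | h3
    · rw [hσlast, hub]; exact hε
    · exact (hM μ hμM).2 i (Finset.mem_Ico.2 ⟨h1, h3⟩) u u' hs hu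
  by_contra hcon
  push Not at hcon
  have e1 := haσ i h1 h2
  have e2 := hστ i h1 h2
  have e3 := hσb i h1 h2
  have k1 : τ i < t := lt_of_le_of_ne ht.1 (by rintro rfl; linarith)
  have k2 : t < σ (i + 1) := lt_of_le_of_ne ht.2 (by rintro rfl; linarith)
  obtain ⟨c, hc, ec⟩ := mvt_aux (u := u) (u' := u') k1
    (fun x hx => hs.1 x ⟨by linarith [hx.1], by linarith [hx.2]⟩)
  obtain ⟨d, hd, ed⟩ := mvt_aux (u := u) (u' := u') k2
    (fun x hx => hs.1 x ⟨by linarith [hx.1], by linarith [hx.2]⟩)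
  have hcd := f2 c d (by linarith [hc.1]) (by linarith [hc.2, hd.1]) (by linarith [hd.2])
    (hsub i h2 _ _ hc.1.le hd.2.le)
  have p1 : 0 < u' c := by
    by_contra hn
    push Not at hn
    have := mul_nonpos_of_nonpos_of_nonneg hn (sub_nonneg.2 k1.le)
    linarith
  have p2 : u' d < 0 := by
    by_contra hn
    push Not at hn
    have := mul_nonneg hn (sub_nonneg.2 k2.le)
    linarith
  linarith
end

section
/- (Sign and ratio transfer across an interval where the weight is non-positive.) Let c < d, let p ∈ L¹([c,d]) with p ≥ 0 a.e., and let w be a nontrivial Carathéodory solution on [c,d] of w'' = p(t) w. (i) If w(c) ≥ 0 and w'(c) ≥ 0, then w(d) ≥ w(c) and w'(d) ≥ w'(c). (ii) If w(c) ≤ 0 and w'(c) ≤ 0, then w(d) ≤ w(c) and w'(d) ≤ w'(c). (iii) In either case, if moreover |w(c)| ≤ γ |w'(c)| for some γ > 0, then w'(t) ≠ 0 for all t ∈ [c,d] and |w(d)| ≤ (γ + (d − c)) |w'(d)|. -/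
open Set MeasureTheory Filter Topology

/-- Carathéodory solution of `w'' = p(t) w` on `[c,d]`: `w'` is the derivative
of `w`, it is absolutely continuous, and the equation holds a.e. -/
def IsConvexSol (c d : ℝ) (p : ℝ → ℝ) (w w' : ℝ → ℝ) : Prop :=
  (∀ t ∈ Set.Icc c d, HasDerivAt w (w' t) t) ∧
  IntervalIntegrable (fun s => p s * w s) MeasureTheory.volume c d ∧
  ∀ t ∈ Set.Icc c d, w' t = w' c + ∫ s in c..t, p s * w s

lemma aux_inc {c d : ℝ} {p w w₁ : ℝ → ℝ} (h : IsConvexSol c d p w w₁)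
    {x z : ℝ} (hx : c ≤ x) (hxz : x ≤ z) (hz : z ≤ d) :
    IntervalIntegrable (fun s => p s * w s) volume x z ∧
    w₁ z = w₁ x + ∫ s in x..z, p s * w s := by
  obtain ⟨_, hi, he⟩ := h
  have h1 : IntervalIntegrable (fun s => p s * w s) volume c x :=
    hi.mono_set (by rw [uIcc_of_le hx, uIcc_of_le (by linarith)]; exact Icc_subset_Icc_right (by linarith))
  have h2 : IntervalIntegrable (fun s => p s * w s) volume x z :=
    hi.mono_set (by rw [uIcc_of_le hxz, uIcc_of_le (by linarith)]; exact Icc_subset_Icc hx hz)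
  refine ⟨h2, ?_⟩
  have e1 := he x ⟨hx, by linarith⟩
  have e2 := he z ⟨by linarith, hz⟩
  have e3 := intervalIntegral.integral_add_adjacent_intervals h1 h2
  linarith

lemma aux_neg {c d : ℝ} {p w w₁ : ℝ → ℝ} (h : IsConvexSol c d p w w₁) :
    IsConvexSol c d p (fun t => - w t) (fun t => - w₁ t) := by
  obtain ⟨hd, hi, he⟩ := h
  refine ⟨fun t ht => (hd t ht).neg, ?_, fun t ht => ?_⟩
  · simp only [mul_neg]
    exact hi.neg
  · have := he t ht
    simp only [mul_neg, intervalIntegral.integral_neg]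
    linarith

lemma aux_ae {c d : ℝ} {p : ℝ → ℝ}
    (hp : ∀ᵐ t ∂(volume.restrict (Set.Icc c d)), 0 ≤ p t) {x z : ℝ} (hx : c ≤ x) (hz : z ≤ d) :
    ∀ᵐ t ∂(volume.restrict (Set.Icc x z)), 0 ≤ p t ∧ t ∈ Icc x z := by
  have h1 := ae_restrict_of_ae_restrict_of_subset (Icc_subset_Icc hx hz) hp
  filter_upwards [h1, ae_restrict_mem measurableSet_Icc] with t h2 h3
  exact ⟨h2, h3⟩

lemma aux_step {c d : ℝ} {p w w₁ : ℝ → ℝ} (h : IsConvexSol c d p w w₁)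
    (hpi : IntegrableOn p (Set.Icc c d))
    (hp : ∀ᵐ t ∂(volume.restrict (Set.Icc c d)), 0 ≤ p t)
    {x z : ℝ} (hx : c ≤ x) (hxz : x < z) (hz : z ≤ d)
    (hs : (z - x) * (∫ s in c..d, p s) < 1) (h0 : 0 ≤ w x) (h1 : 0 ≤ w₁ x) :
    ∀ t ∈ Icc x z, 0 ≤ w t := by
  have hcd : c ≤ d := by linarith
  have hpI : IntervalIntegrable p volume c d := by
    rw [intervalIntegrable_iff_integrableOn_Icc_of_le hcd]; exact hpi
  have hcont : ContinuousOn w (Icc x z) := fun t ht =>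
    (h.1 t ⟨by linarith [ht.1], by linarith [ht.2]⟩).continuousAt.continuousWithinAt
  obtain ⟨m, hm, hmin⟩ := isCompact_Icc.exists_isMinOn (nonempty_Icc.2 hxz.le) hcont
  have hmin' : ∀ t ∈ Icc x z, w m ≤ w t := fun t ht => hmin ht
  suffices 0 ≤ w m from fun t ht => this.trans (hmin' t ht)
  by_contra hneg
  push Not at hneg
  have hxm : x < m := by
    rcases hm.1.eq_or_lt with e | e
    · subst e; linarith
    · exact e
  obtain ⟨ξ, hξ, hξe⟩ := exists_hasDerivAt_eq_slope w w₁ hxm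
    (hcont.mono (Icc_subset_Icc_right hm.2))
    (fun t ht => h.1 t ⟨by linarith [ht.1], by linarith [ht.2, hm.2]⟩)
  have hξd : ξ ≤ d := by linarith [hξ.2, hm.2]
  obtain ⟨hi, he⟩ := aux_inc h hx hξ.1.le hξd
  have hpx : IntervalIntegrable p volume x ξ :=
    hpI.mono_set (by rw [uIcc_of_le hξ.1.le, uIcc_of_le hcd]; exact Icc_subset_Icc hx hξd)
  have hle : ∫ s in x..ξ, p s * w m ≤ ∫ s in x..ξ, p s * w s := by
    refine intervalIntegral.integral_mono_ae_restrict hξ.1.le (hpx.mul_const _) hi ?_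
    filter_upwards [aux_ae hp hx hξd] with t ht
    exact mul_le_mul_of_nonneg_left (hmin' t ⟨ht.2.1, by linarith [ht.2.2, hξ.2, hm.2]⟩) ht.1
  rw [intervalIntegral.integral_mul_const] at hle
  have hPle : ∫ s in x..ξ, p s ≤ ∫ s in c..d, p s := by
    refine intervalIntegral.integral_mono_interval hx hξ.1.le hξd ?_ hpI
    exact ae_restrict_of_ae_restrict_of_subset Ioc_subset_Icc_self hp
  have hP0 : 0 ≤ ∫ s in c..d, p s :=
    intervalIntegral.integral_nonneg_of_ae_restrict hcd hp
  have hmx : 0 < m - x := by linarith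
  rw [eq_div_iff hmx.ne'] at hξe
  set P := ∫ s in c..d, p s
  have a1 : P * w m ≤ w₁ ξ := by nlinarith
  have a2 : (m - x) * P ≤ (z - x) * P := mul_le_mul_of_nonneg_right (by linarith [hm.2]) hP0
  have a3 : P * w m * (m - x) ≤ w m - w x := by
    rw [← hξe]; exact mul_le_mul_of_nonneg_right a1 hmx.le
  have a4 : (1 - (m - x) * P) * w m < 0 := mul_neg_of_pos_of_neg (by linarith) hneg
  linarith

lemma aux_incr {c d : ℝ} {p w w₁ : ℝ → ℝ} (h : IsConvexSol c d p w w₁)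
    (hp : ∀ᵐ t ∂(volume.restrict (Set.Icc c d)), 0 ≤ p t)
    {x z : ℝ} (hx : c ≤ x) (hxz : x ≤ z) (hz : z ≤ d) (h0 : ∀ t ∈ Icc x z, 0 ≤ w t) :
    w₁ x ≤ w₁ z := by
  obtain ⟨_, he⟩ := aux_inc h hx hxz hz
  have : 0 ≤ ∫ s in x..z, p s * w s := by
    refine intervalIntegral.integral_nonneg_of_ae_restrict hxz ?_
    filter_upwards [aux_ae hp hx hz] with t ht
    exact mul_nonneg ht.1 (h0 t ht.2)
  linarith

lemma aux_pos {c d : ℝ} {p w w₁ : ℝ → ℝ} (hcd : c < d) (h : IsConvexSol c d p w w₁)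
    (hpi : IntegrableOn p (Set.Icc c d))
    (hp : ∀ᵐ t ∂(volume.restrict (Set.Icc c d)), 0 ≤ p t)
    (h0 : 0 ≤ w c) (h1 : 0 ≤ w₁ c) :
    ∀ t ∈ Icc c d, 0 ≤ w t := by
  have hw : ContinuousOn w (Icc c d) := fun t ht => (h.1 t ht).continuousAt.continuousWithinAt
  have hw1 : ContinuousOn w₁ (Icc c d) := by
    have hi := h.2.1
    rw [intervalIntegrable_iff_integrableOn_Icc_of_le hcd.le] at hi
    have := intervalIntegral.continuousOn_primitive_interval (f := fun s => p s * w s)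
      (a := c) (b := d) (μ := volume) (by rwa [uIcc_of_le hcd.le])
    rw [uIcc_of_le hcd.le] at this
    exact (continuousOn_const.add this).congr h.2.2
  have hP0 : 0 ≤ ∫ s in c..d, p s :=
    intervalIntegral.integral_nonneg_of_ae_restrict hcd.le hp
  have key : Icc c d ⊆ {t | 0 ≤ w t ∧ 0 ≤ w₁ t} := by
    apply IsClosed.Icc_subset_of_forall_exists_gt
    · have c1 := hw.preimage_isClosed_of_isClosed isClosed_Icc (isClosed_Ici (a := (0:ℝ)))
      have c2 := hw1.preimage_isClosed_of_isClosed isClosed_Icc (isClosed_Ici (a := (0:ℝ)))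
      convert c1.inter c2 using 1
      ext t
      simp only [mem_inter_iff, mem_ofPred_eq, mem_preimage, mem_Ici]
      tauto
    · exact ⟨h0, h1⟩
    · rintro x ⟨⟨hx0, hx1⟩, hxc, hxd⟩ y hy
      set P := ∫ s in c..d, p s
      have he : 0 < 1 / (P + 1) := by positivity
      obtain ⟨z, hz1, hz2⟩ := exists_between
        (lt_min (lt_min hy hxd) (show x < x + 1 / (P + 1) by linarith))
      have hzy : z < y := hz2.trans_le ((min_le_left _ _).trans (min_le_left _ _))
      have hzd : z < d := hz2.trans_le ((min_le_left _ _).trans (min_le_right _ _))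
      have hze : z < x + 1 / (P + 1) := hz2.trans_le (min_le_right _ _)
      have hs : (z - x) * P < 1 := by
        have : (z - x) * (P + 1) < 1 := by
          rw [← lt_div_iff₀ (by positivity)]; linarith
        nlinarith
      have hn := aux_step h hpi hp hxc hz1 hzd.le hs hx0 hx1
      exact ⟨z, ⟨hn z ⟨hz1.le, le_rfl⟩, hx1.trans (aux_incr h hp hxc hz1.le hzd.le hn)⟩,
        hz1, hzy.le⟩
  exact fun t ht => (key ht).1

lemma aux_all {c d : ℝ} {p w w₁ : ℝ → ℝ} (hcd : c < d) (h : IsConvexSol c d p w w₁)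
    (hpi : IntegrableOn p (Set.Icc c d))
    (hp : ∀ᵐ t ∂(volume.restrict (Set.Icc c d)), 0 ≤ p t)
    (hnt : ¬ ∀ t ∈ Set.Icc c d, w t = 0)
    (h0 : 0 ≤ w c) (h1 : 0 ≤ w₁ c) :
    (w c ≤ w d ∧ w₁ c ≤ w₁ d) ∧ ∀ γ > (0 : ℝ), |w c| ≤ γ * |w₁ c| →
      (∀ t ∈ Set.Icc c d, w₁ t ≠ 0) ∧ |w d| ≤ (γ + (d - c)) * |w₁ d| := by
  have hpos := aux_pos hcd h hpi hp h0 h1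
  have hlow : ∀ t ∈ Icc c d, w₁ c ≤ w₁ t := fun t ht =>
    aux_incr h hp le_rfl ht.1 ht.2 fun s hs => hpos s ⟨hs.1, hs.2.trans ht.2⟩
  have hup : ∀ t ∈ Icc c d, w₁ t ≤ w₁ d := fun t ht =>
    aux_incr h hp ht.1 ht.2 le_rfl fun s hs => hpos s ⟨ht.1.trans hs.1, hs.2⟩
  have hw : ContinuousOn w (Icc c d) := fun t ht => (h.1 t ht).continuousAt.continuousWithinAt
  obtain ⟨ξ, hξ, hξe⟩ := exists_hasDerivAt_eq_slope w w₁ hcd hw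
    (fun t ht => h.1 t (Ioo_subset_Icc_self ht))
  have hdc : 0 < d - c := by linarith
  rw [eq_div_iff hdc.ne'] at hξe
  have l1 := hlow ξ (Ioo_subset_Icc_self hξ)
  have l2 := hup ξ (Ioo_subset_Icc_self hξ)
  have l3 := hlow d ⟨hcd.le, le_rfl⟩
  have hwcd : w c ≤ w d := by nlinarith
  refine ⟨⟨hwcd, l3⟩, fun γ hγ hr => ?_⟩
  rw [abs_of_nonneg h0, abs_of_nonneg h1] at hr
  have hpc : 0 < w₁ c := by
    rcases h1.eq_or_lt with e | e
    · exfalso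
      apply hnt
      rw [← e, mul_zero] at hr
      have := aux_pos hcd (aux_neg h) hpi hp (by simpa using hr) (by simp [← e])
      intro t ht
      have a := this t ht
      have b := hpos t ht
      simp only [Left.nonneg_neg_iff] at a
      linarith
    · exact e
  refine ⟨fun t ht => (hpc.trans_le (hlow t ht)).ne', ?_⟩
  rw [abs_of_nonneg (h0.trans hwcd), abs_of_nonneg (h1.trans l3)]
  have b1 : γ * w₁ c ≤ γ * w₁ d := mul_le_mul_of_nonneg_left l3 hγ.le
  have b2 : w₁ ξ * (d - c) ≤ w₁ d * (d - c) := mul_le_mul_of_nonneg_right l2 hdc.le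
  linarith

/-- **Sign and ratio transfer across an interval where the weight
is non-positive.** For `p ≥ 0` a.e. and `w` a nontrivial solution of
`w'' = p(t) w` on `[c,d]`:
(i) if `w(c) ≥ 0` and `w'(c) ≥ 0` then `w(d) ≥ w(c)` and `w'(d) ≥ w'(c)`;
(ii) if `w(c) ≤ 0` and `w'(c) ≤ 0` then `w(d) ≤ w(c)` and `w'(d) ≤ w'(c)`;
(iii) in either case, if `|w(c)| ≤ γ |w'(c)|` for some `γ > 0`, then `w' ≠ 0`
on `[c,d]` and `|w(d)| ≤ (γ + (d-c)) |w'(d)|`. -/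
theorem sign_and_ratio_transfer
    (c d : ℝ) (hcd : c < d)
    (p : ℝ → ℝ)
    (hp_int : IntegrableOn p (Set.Icc c d))
    (hp_nonneg : ∀ᵐ t ∂(volume.restrict (Set.Icc c d)), 0 ≤ p t)
    (w w₁ : ℝ → ℝ)
    (hw_sol : IsConvexSol c d p w w₁)
    (hw_nt : ¬ ∀ t ∈ Set.Icc c d, w t = 0) :
    ((0 ≤ w c → 0 ≤ w₁ c → w c ≤ w d ∧ w₁ c ≤ w₁ d) ∧
     (w c ≤ 0 → w₁ c ≤ 0 → w d ≤ w c ∧ w₁ d ≤ w₁ c)) ∧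
    (∀ γ > (0 : ℝ),
      ((0 ≤ w c ∧ 0 ≤ w₁ c) ∨ (w c ≤ 0 ∧ w₁ c ≤ 0)) →
      |w c| ≤ γ * |w₁ c| →
      (∀ t ∈ Set.Icc c d, w₁ t ≠ 0) ∧ |w d| ≤ (γ + (d - c)) * |w₁ d|) := by
  have hneg : w c ≤ 0 → w₁ c ≤ 0 → _ := fun h0 h1 =>
    aux_all hcd (aux_neg hw_sol) hp_int hp_nonneg (by simpa using hw_nt)
      (by simpa using h0) (by simpa using h1)
  have hpos := aux_all hcd hw_sol hp_int hp_nonneg hw_nt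
  refine ⟨⟨fun h0 h1 => (hpos h0 h1).1, fun h0 h1 => ?_⟩, ?_⟩
  · simpa using (hneg h0 h1).1
  · rintro γ hγ (⟨h0, h1⟩ | ⟨h0, h1⟩) hr
    · exact (hpos h0 h1).2 γ hγ hr
    · simpa using (hneg h0 h1).2 γ hγ (by simpa using hr)
end
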